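/- The sequence (1/n) log R_n converges to a real limit log ρ as n → ∞, and the sequence (1/n) log R_n^T converges to a real limit log ρ^T as n → ∞. -/

import Mathlib

/-!
The proof compares the two resistances with two minimal energies, shows that these are dual to each
other, and applies Fekete's lemma to one of them.

*Minimal energies.*  `DT n f` and `DH n g` are Dirichlet sums over the ordered triangles `OF n` of
`T_n`, for functions on points and on sets of points; `dT n` and `dH n` are their infima over
functions with the prescribed values on the sides of the hexagon.  Every edge of the graphs comes
from a bounded number of ordered triangles and has conductance between `1/2` and `2`, so the effective
conductances of `G_n^T` and `G_n^H` are comparable to `dT n` and `dH n` with universal constants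
(`cT_compare`, `cH_compare`), and have the same exponential growth rates.

*Duality* (`dT_mul_dH`): `dT n * dH n = 4`.  For admissible `f` and `g`, the sum over oriented
triangles of `df` against `dg` depends only on boundary values by the discrete Stokes formula, and
Cauchy–Schwarz gives `4 ≤ DT n f * DH n g` (`four_le`).  Equality is attained (`exists_dual`): by
Kirchhoff's laws the current of the harmonic `g` is a function of oriented edges without circulation
around triangles, hence by the Poincaré lemma (`poincare`) the gradient of some `f`; this `f` is
constant on the sides `2` and `5`, through which no current flows.

*Submultiplicativity* (`submult`): `dT (m + k) ≤ 24 * dT m * dT k` for `m, k ≥ 1`.  Given potentials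
`f` on `T_m` and `h` on `T_k`, each of the six children of a triangle of `T_m` is mapped affinely onto
four sectors of the hexagon, and `f` is interpolated on it by weights made from the pullbacks of `h`.  The weights satisfy the symmetries that make
the pieces fit together, and the interpolation is Lipschitz in them, so the energy of the result is
at most a constant times the product of the energies.  Gluing the pieces uses that `T_m` is
geometrically embedded in the plane (`emb`): barycentric coordinates do not depend on the triangle
used to compute them.

*Conclusion.*  Fekete's lemma for `log (24 * dT n)`, which is bounded below linearly in `n`
(`dT_lower`), gives the limit `L` of `log (dT n) / n`; then `log (RT n) / n` tends to `-L`, and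
`log (RH n) / n` tends to `L` by duality.
-/

/-!
Setup for the barycentric subdivision / hexacarpet resistance problem
(Begué, Kelleher, Nelson, Panzo, Pellico, Teplyaev, "Resistance scaling
and the number of spanning trees ..." / Barlow–Bass type estimates).

We realize the repeated barycentric subdivision of a triangle via its
hexagonal planar embedding: for `n ≥ 1` the complex `T_n` is embedded
in the plane with the seven vertices of `T_1` sent to the corners and
the center of a regular hexagon, and deeper subdivisions computed by
taking barycenters.  The `n`-th level triangles are recorded as ordered
triples of points of the plane.
-/

noncomputable section

namespace BarycentricHexacarpet

attribute [local instance] Classical.propDecidable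

/-- Points of the plane. -/
abbrev Pt : Type := ℝ × ℝ

/-- Barycenter of three points. -/
def bary (a b c : Pt) : Pt := (3:ℝ)⁻¹ • (a + b + c)

/-- Midpoint (barycenter of an edge). -/
def mpt (a b : Pt) : Pt := (2:ℝ)⁻¹ • (a + b)

/-- The six triangles of the barycentric subdivision of the triangle `(a,b,c)`,
each recorded as (vertex, barycenter of an edge containing it, barycenter). -/
def children : Pt × Pt × Pt → Set (Pt × Pt × Pt) := fun t =>
  {(t.1, mpt t.1 t.2.1, bary t.1 t.2.1 t.2.2), (t.2.1, mpt t.1 t.2.1, bary t.1 t.2.1 t.2.2),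
   (t.2.1, mpt t.2.1 t.2.2, bary t.1 t.2.1 t.2.2), (t.2.2, mpt t.2.1 t.2.2, bary t.1 t.2.1 t.2.2),
   (t.1, mpt t.1 t.2.2, bary t.1 t.2.1 t.2.2), (t.2.2, mpt t.1 t.2.2, bary t.1 t.2.1 t.2.2)}

/-- The corners of the regular hexagon: `p_0, p_0', p_1, p_1', p_2, p_2'`
are the corners with indices `0, 1, 2, 3, 4, 5`. -/
def hexCorner (i : ℕ) : Pt := (Real.cos (i * (Real.pi / 3)), Real.sin (i * (Real.pi / 3)))

/-- The set of (ordered) triangles of the `n`-th barycentric subdivision `T_n`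
of the triangle, in the hexagonal embedding (defined for `n ≥ 1`):  the six
triangles of `T_1` are the six sectors of the regular hexagon, and each further
subdivision is barycentric. -/
def TriSet : ℕ → Set (Pt × Pt × Pt)
  | 0 => ∅
  | 1 => {t | ∃ i : Fin 6, t = (hexCorner i, hexCorner (i + 1), ((0:ℝ), (0:ℝ)))}
  | (n + 2) => ⋃ t ∈ TriSet (n + 1), children t

/-- `E_n^2`: the 2-simplexes (triangles) of `T_n`, as 3-element vertex sets. -/
def Simp2 (n : ℕ) : Set (Set Pt) :=
  {s | ∃ t ∈ TriSet n, s = {t.1, t.2.1, t.2.2}}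

/-- `E_n^1`: the 1-simplexes (edges) of `T_n`, as 2-element vertex sets. -/
def Simp1 (n : ℕ) : Set (Set Pt) :=
  {s | ∃ t ∈ TriSet n, s = {t.1, t.2.1} ∨ s = {t.2.1, t.2.2} ∨ s = {t.1, t.2.2}}

/-- `E_n^0`: the 0-simplexes (vertices) of `T_n`. -/
def Simp0 (n : ℕ) : Set Pt :=
  {p | ∃ t ∈ TriSet n, p = t.1 ∨ p = t.2.1 ∨ p = t.2.2}

/-- Conductances of the 1-skeleton graph `G_n^T`:  vertices `p ≠ q` are adjacent
iff `{p,q}` is an edge of `T_n`; the conductance is `2` if the edge is contained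
in exactly one triangle of `T_n`, and `1` if it is contained in two triangles. -/
def cT (n : ℕ) (p q : Pt) : ℝ :=
  if p ≠ q ∧ ({p, q} : Set Pt) ∈ Simp1 n then
    (if {f ∈ Simp2 n | p ∈ f ∧ q ∈ f}.ncard = 1 then 2 else 1)
  else 0

/-- Conductances of the (modified) hexacarpet graph `G_n^H`:  its vertex set is
`E_n^2 ∪ E_n^1`, an edge `e ∈ E_n^1` is adjacent to a triangle `f ∈ E_n^2` iff
`e` is a face of `f`, and every edge of the graph has conductance `1/2`. -/
def cH (n : ℕ) (u v : Set Pt) : ℝ :=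
  if (u ∈ Simp1 n ∧ v ∈ Simp2 n ∧ u ⊆ v) ∨ (v ∈ Simp1 n ∧ u ∈ Simp2 n ∧ v ⊆ u)
  then 1 / 2 else 0

/-- The energy of a potential `f` on a weighted graph with conductances `c`:
`E(f) = (1/2) ∑ c p q * (f p - f q)^2`. -/
def energy {V : Type} (c : V → V → ℝ) (f : V → ℝ) : ℝ :=
  (1 / 2) * ∑' p : V, ∑' q : V, c p q * (f p - f q) ^ 2

/-- The effective resistance between `A` and `B`:
`R(A,B) = (inf {E(f) : f ≡ 0 on A, f ≡ 1 on B})⁻¹`. -/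
def effRes {V : Type} (c : V → V → ℝ) (A B : Set V) : ℝ :=
  (sInf {e : ℝ | ∃ f : V → ℝ, (∀ p ∈ A, f p = 0) ∧ (∀ p ∈ B, f p = 1) ∧ e = energy c f})⁻¹

/-- The `i`-th closed side of the hexagon. -/
def hexSide (i : ℕ) : Set Pt := segment ℝ (hexCorner i) (hexCorner (i + 1))

/-- `L_i^{(n,T)}`: the vertices of `G_n^T` whose geometric realization lies in
the `i`-th closed side of the hexagon. -/
def LsetT (n i : ℕ) : Set Pt := {p ∈ Simp0 n | p ∈ hexSide i}

/-- `L_i^{(n,H)}`: the vertices of `G_n^H` whose geometric realization lies in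
the `i`-th closed side of the hexagon. -/
def LsetH (n i : ℕ) : Set (Set Pt) :=
  {v ∈ Simp2 n ∪ Simp1 n | convexHull ℝ v ⊆ hexSide i}

/-- `R_n^T`: the effective resistance in `G_n^T` between
`A_{(n)}^T = L_2^{(n,T)}` and `B_{(n)}^T = L_5^{(n,T)}`. -/
def RT (n : ℕ) : ℝ := effRes (cT n) (LsetT n 2) (LsetT n 5)

/-- `R_n`: the effective resistance in `G_n^H` between
`A_{(n)}^H = L_0^{(n,H)} ∪ L_1^{(n,H)}` and `B_{(n)}^H = L_3^{(n,H)} ∪ L_4^{(n,H)}`. -/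
def RH (n : ℕ) : ℝ :=
  effRes (cH n) (LsetH n 0 ∪ LsetH n 1) (LsetH n 3 ∪ LsetH n 4)

end BarycentricHexacarpet

namespace BarycentricHexacarpet

/-! ### Coordinates and ordered triangles -/

section Geometry
open scoped Classical

/-- First coordinate of a point in the basis `hexCorner 0`, `hexCorner 1` of the plane. -/
def cx (p : Pt) : ℝ := p.1 - p.2 / √3

/-- Second coordinate of a point in the basis `hexCorner 0`, `hexCorner 1` of the plane. -/
def cy (p : Pt) : ℝ := 2 * p.2 / √3

lemma sqrt3_pos : (0 : ℝ) < √3 := by positivity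

lemma pt_ext {p q : Pt} (hx : cx p = cx q) (hy : cy p = cy q) : p = q := by
  have h3 := sqrt3_pos
  unfold cx at hx
  unfold cy at hy
  have h2 : p.2 = q.2 := by field_simp at hy; linarith
  rw [h2] at hx
  exact Prod.ext (by linarith) h2

@[simp] lemma cx_add (p q : Pt) : cx (p + q) = cx p + cx q := by simp [cx]; ring
@[simp] lemma cy_add (p q : Pt) : cy (p + q) = cy p + cy q := by simp [cy]; ring
@[simp] lemma cx_smul (a : ℝ) (p : Pt) : cx (a • p) = a * cx p := by simp [cx]; ring
@[simp] lemma cy_smul (a : ℝ) (p : Pt) : cy (a • p) = a * cy p := by simp [cy]; ring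
@[simp] lemma cx_zero : cx ((0 : ℝ), (0 : ℝ)) = 0 := by simp [cx]
@[simp] lemma cy_zero : cy ((0 : ℝ), (0 : ℝ)) = 0 := by simp [cy]
@[simp] lemma cx_zero' : cx 0 = 0 := by simp [cx]
@[simp] lemma cy_zero' : cy 0 = 0 := by simp [cy]

@[simp] lemma cx_neg (p : Pt) : cx (-p) = -cx p := by simp [cx]; ring
@[simp] lemma cy_neg (p : Pt) : cy (-p) = -cy p := by simp [cy]; ring

lemma hexCorner_add_three (i : ℕ) : hexCorner (i + 3) = (-1 : ℝ) • hexCorner i := by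
  have : ((i + 3 : ℕ) : ℝ) * (Real.pi / 3) = i * (Real.pi / 3) + Real.pi := by push_cast; ring
  simp only [hexCorner, this, Real.cos_add_pi, Real.sin_add_pi]
  simp

lemma hexCorner_zero : hexCorner 0 = (1, 0) := by simp [hexCorner]

lemma hexCorner_one : hexCorner 1 = (1 / 2, √3 / 2) := by simp [hexCorner]

lemma hexCorner_two : hexCorner 2 = (-1 / 2, √3 / 2) := by
  have : (((2 : ℕ) : ℝ)) * (Real.pi / 3) = Real.pi - Real.pi / 3 := by push_cast; ring
  simp only [hexCorner, this, Real.cos_pi_sub, Real.sin_pi_sub, Real.cos_pi_div_three,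
    Real.sin_pi_div_three]
  norm_num

@[simp] lemma cx_h0 : cx (hexCorner 0) = 1 := by simp [hexCorner_zero, cx]
@[simp] lemma cy_h0 : cy (hexCorner 0) = 0 := by simp [hexCorner_zero, cy]
@[simp] lemma cx_h1 : cx (hexCorner 1) = 0 := by
  have := sqrt3_pos.ne'
  rw [hexCorner_one]; unfold cx; field_simp; norm_num
@[simp] lemma cy_h1 : cy (hexCorner 1) = 1 := by
  have := sqrt3_pos.ne'
  rw [hexCorner_one]; unfold cy; field_simp
@[simp] lemma cx_h2 : cx (hexCorner 2) = -1 := by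
  have := sqrt3_pos.ne'
  rw [hexCorner_two]; unfold cx; field_simp; norm_num
@[simp] lemma cy_h2 : cy (hexCorner 2) = 1 := by
  have := sqrt3_pos.ne'
  rw [hexCorner_two]; unfold cy; field_simp
@[simp] lemma cx_h3 : cx (hexCorner 3) = -1 := by rw [hexCorner_add_three 0]; simp
@[simp] lemma cy_h3 : cy (hexCorner 3) = 0 := by rw [hexCorner_add_three 0]; simp
@[simp] lemma cx_h4 : cx (hexCorner 4) = 0 := by rw [hexCorner_add_three 1]; simp
@[simp] lemma cy_h4 : cy (hexCorner 4) = -1 := by rw [hexCorner_add_three 1]; simp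
@[simp] lemma cx_h5 : cx (hexCorner 5) = 1 := by rw [hexCorner_add_three 2]; simp
@[simp] lemma cy_h5 : cy (hexCorner 5) = -1 := by rw [hexCorner_add_three 2]; simp
@[simp] lemma hexCorner_six : hexCorner 6 = hexCorner 0 := by
  rw [hexCorner_add_three 3, hexCorner_add_three 0]; simp

/-- Twice the signed area of the triangle `p q r`, up to a fixed positive factor. -/
def det3 (p q r : Pt) : ℝ := (cx q - cx p) * (cy r - cy p) - (cy q - cy p) * (cx r - cx p)

/-- `(p, q, r)` is one of the six orderings of the vertices of a triangle of `T_n`. -/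
def OT (n : ℕ) (p q r : Pt) : Prop :=
  (p, q, r) ∈ TriSet n ∨ (q, p, r) ∈ TriSet n ∨ (p, r, q) ∈ TriSet n ∨
  (q, r, p) ∈ TriSet n ∨ (r, p, q) ∈ TriSet n ∨ (r, q, p) ∈ TriSet n

lemma OT.swap12 {n p q r} (h : OT n p q r) : OT n q p r := by unfold OT at *; tauto
lemma OT.swap23 {n p q r} (h : OT n p q r) : OT n p r q := by unfold OT at *; tauto
lemma OT.rot {n p q r} (h : OT n p q r) : OT n q r p := by unfold OT at *; tauto
lemma OT.rot' {n p q r} (h : OT n p q r) : OT n r p q := by unfold OT at *; tauto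
lemma OT.swap13 {n p q r} (h : OT n p q r) : OT n r q p := by unfold OT at *; tauto
lemma OT.of_mem {n} {t : Pt × Pt × Pt} (h : t ∈ TriSet n) : OT n t.1 t.2.1 t.2.2 := Or.inl h

lemma mpt_comm (p q : Pt) : mpt p q = mpt q p := by simp [mpt, add_comm]
lemma bary_swap12 (p q r : Pt) : bary p q r = bary q p r := by simp [bary, add_comm]
lemma bary_swap23 (p q r : Pt) : bary p q r = bary p r q := by simp [bary, add_right_comm]
lemma bary_rot (p q r : Pt) : bary q r p = bary p q r := by
  rw [bary_swap23 q r p, bary_swap12]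
lemma bary_rot' (p q r : Pt) : bary r p q = bary p q r := by
  rw [bary_swap12 r p q, bary_swap23]
lemma bary_swap13 (p q r : Pt) : bary r q p = bary p q r := by
  rw [bary_swap12 r q p, bary_rot]

/-- The triangles of `T_{n+1}` are the triples (vertex, midpoint, barycenter) coming from the
orderings of the triangles of `T_n`. -/
lemma mem_TriSet_succ {n : ℕ} {t : Pt × Pt × Pt} :
    t ∈ TriSet (n + 2) ↔ ∃ p q r, OT (n + 1) p q r ∧ t = (p, mpt p q, bary p q r) := by
  simp only [TriSet, Set.mem_iUnion, exists_prop]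
  constructor
  · rintro ⟨⟨p, q, r⟩, hs, ht⟩
    have ho : OT (n + 1) p q r := Or.inl hs
    simp only [children, Set.mem_insert_iff, Set.mem_singleton_iff] at ht
    rcases ht with h | h | h | h | h | h
    · exact ⟨p, q, r, ho, h⟩
    · exact ⟨q, p, r, ho.swap12, by rw [h, mpt_comm p q, bary_swap12 p q]⟩
    · exact ⟨q, r, p, ho.rot, by rw [h, bary_rot p q r]⟩
    · exact ⟨r, q, p, ho.swap13, by rw [h, mpt_comm q r, bary_swap13]⟩
    · exact ⟨p, r, q, ho.swap23, by rw [h, bary_swap23]⟩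
    · exact ⟨r, p, q, ho.rot', by rw [h, mpt_comm p r, bary_rot' p q r]⟩
  · rintro ⟨p, q, r, h, rfl⟩
    rcases h with h | h | h | h | h | h <;> refine ⟨_, h, ?_⟩ <;>
      simp only [children, Set.mem_insert_iff, Set.mem_singleton_iff, Prod.mk.injEq]
    · simp
    · simp [mpt_comm p q, bary_swap12 p q r]
    · simp [bary_swap23 p q r]
    · simp [bary_rot p q r, mpt_comm p q]
    · simp [bary_rot' p q r]
    · simp [bary_swap13 p q r, mpt_comm p q]

lemma mem_TriSet_one {t : Pt × Pt × Pt} : t ∈ TriSet 1 ↔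
    t = (hexCorner 0, hexCorner 1, ((0:ℝ), (0:ℝ))) ∨ t = (hexCorner 1, hexCorner 2, ((0:ℝ), (0:ℝ))) ∨
    t = (hexCorner 2, hexCorner 3, ((0:ℝ), (0:ℝ))) ∨ t = (hexCorner 3, hexCorner 4, ((0:ℝ), (0:ℝ))) ∨
    t = (hexCorner 4, hexCorner 5, ((0:ℝ), (0:ℝ))) ∨
    t = (hexCorner 5, hexCorner 0, ((0:ℝ), (0:ℝ))) := by
  simp only [TriSet, Set.mem_ofPred_eq, Fin.exists_fin_succ]
  simp

/-- The child of an ordered triangle. -/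
lemma OT.child {n p q r} (h : OT (n + 1) p q r) :
    (p, mpt p q, bary p q r) ∈ TriSet (n + 2) := mem_TriSet_succ.2 ⟨p, q, r, h, rfl⟩

lemma det3_child (p q r : Pt) : det3 p (mpt p q) (bary p q r) = det3 p q r / 6 := by
  simp [det3, mpt, bary]; ring

lemma det3_swap12 (p q r : Pt) : det3 q p r = - det3 p q r := by simp [det3]; ring
lemma det3_swap23 (p q r : Pt) : det3 p r q = - det3 p q r := by simp [det3]; ring
lemma det3_rot (p q r : Pt) : det3 q r p = det3 p q r := by simp [det3]; ring

lemma OT.det_ne_of {n} (H : ∀ p q r, (p, q, r) ∈ TriSet n → det3 p q r ≠ 0) {p q r}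
    (h : OT n p q r) : det3 p q r ≠ 0 := by
  rcases h with h | h | h | h | h | h <;> have := H _ _ _ h <;>
    simp only [det3] at * <;> contrapose! this <;> linarith

lemma det_ne (n : ℕ) : ∀ p q r, (p, q, r) ∈ TriSet (n + 1) → det3 p q r ≠ 0 := by
  induction n with
  | zero =>
    intro p q r h
    rcases mem_TriSet_one.1 h with h | h | h | h | h | h <;>
      (simp only [Prod.mk.injEq] at h; obtain ⟨rfl, rfl, rfl⟩ := h; simp [det3])
  | succ n ih =>
    intro p q r h
    obtain ⟨a, b, c, ho, e⟩ := mem_TriSet_succ.1 h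
    simp only [Prod.mk.injEq] at e; obtain ⟨rfl, rfl, rfl⟩ := e
    rw [det3_child]
    have := OT.det_ne_of ih ho
    simp [this]

lemma OT.det_ne {n p q r} (h : OT (n + 1) p q r) : det3 p q r ≠ 0 :=
  OT.det_ne_of (BarycentricHexacarpet.det_ne n) h

lemma OT.ne12 {n p q r} (h : OT (n + 1) p q r) : p ≠ q := by
  rintro rfl; exact h.det_ne (by simp [det3])
lemma OT.ne13 {n p q r} (h : OT (n + 1) p q r) : p ≠ r := h.swap23.ne12
lemma OT.ne23 {n p q r} (h : OT (n + 1) p q r) : q ≠ r := h.rot.ne12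

end Geometry

/-! ### Geometric embedding of the subdivisions -/

section Embedding
open scoped Classical

/-- Two equal measures on at most three atoms with weights sorted decreasingly (written through the
increments `a, b / 2, c / 3`): the partial sums of the weights are comparable. -/
lemma partial_sums_le {p q r p' q' r' : Pt} (h12 : p ≠ q) (h13 : p ≠ r) (h23 : q ≠ r)
    (h12' : p' ≠ q') (h13' : p' ≠ r') (h23' : q' ≠ r') {a b c a' b' c' : ℝ}
    (ha' : 0 ≤ a') (hb' : 0 ≤ b') (hc' : 0 ≤ c')
    (H : ∀ F : Pt → ℝ, (a + b / 2 + c / 3) * F p + (b / 2 + c / 3) * F q + c / 3 * F r =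
      (a' + b' / 2 + c' / 3) * F p' + (b' / 2 + c' / 3) * F q' + c' / 3 * F r') :
    a + b / 2 + c / 3 ≤ a' + b' / 2 + c' / 3 ∧
      a + b + c / 3 * 2 ≤ a' + b' + c' / 3 * 2 := by
  have e1 := H (fun x => if x = p then 1 else 0)
  have e2 := H (fun x => if x = p ∨ x = q then 1 else 0)
  simp only [h12, h13, h23, h12.symm, h13.symm, h23.symm, if_true, if_false, mul_one, mul_zero,
    add_zero, zero_add, or_self, or_true, true_or] at e1 e2
  refine ⟨?_, ?_⟩
  · by_cases x1 : p' = p <;> by_cases x2 : q' = p <;> by_cases x3 : r' = p <;>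
      first
      | exact absurd (x1.trans x2.symm) h12'
      | exact absurd (x1.trans x3.symm) h13'
      | exact absurd (x2.trans x3.symm) h23'
      | (simp only [x1, x2, x3, if_true, if_false] at e1; linarith)
  · by_cases x1 : p' = p ∨ p' = q <;> by_cases x2 : q' = p ∨ q' = q <;>
      by_cases x3 : r' = p ∨ r' = q <;>
      simp only [x1, x2, x3, if_true, if_false] at e2 <;> try linarith
    exfalso
    rcases x1 with rfl | rfl <;> rcases x2 with rfl | rfl <;> rcases x3 with rfl | rfl <;>
      simp_all

/-- A point of a triangulated surface determines its barycentric coordinates, hence their sorted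
values and the faces spanned by the largest ones.  The weights `a, b, c` are the coordinates with
respect to the vertex, midpoint and barycenter of the subdivided triangle. -/
lemma layer_cake {p q r p' q' r' : Pt} (h12 : p ≠ q) (h13 : p ≠ r) (h23 : q ≠ r)
    (h12' : p' ≠ q') (h13' : p' ≠ r') (h23' : q' ≠ r') {a b c a' b' c' : ℝ}
    (ha : 0 ≤ a) (hb : 0 ≤ b) (hc : 0 ≤ c) (ha' : 0 ≤ a') (hb' : 0 ≤ b') (hc' : 0 ≤ c')
    (H : ∀ F : Pt → ℝ, (a + b / 2 + c / 3) * F p + (b / 2 + c / 3) * F q + c / 3 * F r =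
      (a' + b' / 2 + c' / 3) * F p' + (b' / 2 + c' / 3) * F q' + c' / 3 * F r') :
    a = a' ∧ b = b' ∧ c = c' ∧ (0 < a → p = p') ∧
      (0 < b → (p = p' ∧ q = q') ∨ (p = q' ∧ q = p')) ∧
      (0 < c → (p = p' ∧ q = q' ∧ r = r') ∨ (p = q' ∧ q = p' ∧ r = r') ∨
        (p = p' ∧ q = r' ∧ r = q') ∨ (p = q' ∧ q = r' ∧ r = p') ∨
        (p = r' ∧ q = p' ∧ r = q') ∨ (p = r' ∧ q = q' ∧ r = p')) := by
  obtain ⟨s1, s2⟩ := partial_sums_le h12 h13 h23 h12' h13' h23' ha' hb' hc' H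
  obtain ⟨t1, t2⟩ := partial_sums_le h12' h13' h23' h12 h13 h23 ha hb hc (fun F => (H F).symm)
  have hs := H (fun _ => 1)
  have ec : c = c' := by linarith
  have eb : b = b' := by linarith
  have ea : a = a' := by linarith
  subst ea eb ec
  have e1 := H (fun x => if x = p then 1 else 0)
  have e2 := H (fun x => if x = q then 1 else 0)
  have e3 := H (fun x => if x = r then 1 else 0)
  simp only [h12, h13, h23, h12.symm, h13.symm, h23.symm, if_true, if_false, mul_one, mul_zero,
    add_zero, zero_add] at e1 e2 e3
  -- in each regime, every atom heavier than the remaining ones is matched with an atom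
  have m1 : 0 < a → p' = p := by
    intro h
    by_contra x
    rw [if_neg x] at e1
    split_ifs at e1 with y z <;> first | linarith | exact h23' (y.trans z.symm)
  have m2 : ∀ x, 0 < b → b / 2 + c / 3 ≤ (a + b / 2 + c / 3) * (if p' = x then 1 else 0)
      + (b / 2 + c / 3) * (if q' = x then 1 else 0) + c / 3 * (if r' = x then 1 else 0) →
      x = p' ∨ x = q' := by
    intro x h hx
    by_contra! y
    rw [if_neg y.1.symm, if_neg y.2.symm] at hx
    split_ifs at hx <;> linarith
  have m3 : ∀ x, 0 < c → c / 3 ≤ (a + b / 2 + c / 3) * (if p' = x then 1 else 0)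
      + (b / 2 + c / 3) * (if q' = x then 1 else 0) + c / 3 * (if r' = x then 1 else 0) →
      x = p' ∨ x = q' ∨ x = r' := by
    intro x h hx
    by_contra! y
    rw [if_neg y.1.symm, if_neg y.2.1.symm, if_neg y.2.2.symm] at hx
    linarith
  refine ⟨rfl, rfl, rfl, fun h => (m1 h).symm, fun h => ?_, fun h => ?_⟩
  · have u1 := m2 p h (by linarith)
    have u2 := m2 q h (by linarith)
    clear m1 m2 m3 e1 e2 e3 H
    rcases u1 with rfl | rfl <;> rcases u2 with rfl | rfl <;> simp_all
  · have u1 := m3 p h (by linarith)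
    have u2 := m3 q h (by linarith)
    have u3 := m3 r h (by linarith)
    clear m1 m2 m3 e1 e2 e3 H
    rcases u1 with rfl | rfl | rfl <;> rcases u2 with rfl | rfl | rfl <;>
      rcases u3 with rfl | rfl | rfl <;> simp_all

/-- `T_n` is a geometric simplicial complex: barycentric coordinates of a point, as functions on
the vertices, do not depend on the triangle used to compute them. -/
def Emb (n : ℕ) : Prop := ∀ p q r p' q' r' : Pt, (p, q, r) ∈ TriSet n → (p', q', r') ∈ TriSet n →
  ∀ a b c a' b' c' : ℝ, 0 ≤ a → 0 ≤ b → 0 ≤ c → 0 ≤ a' → 0 ≤ b' → 0 ≤ c' →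
    a + b + c = 1 → a' + b' + c' = 1 → a • p + b • q + c • r = a' • p' + b' • q' + c' • r' →
    ∀ F : Pt → ℝ, a * F p + b * F q + c * F r = a' * F p' + b' * F q' + c' * F r'

lemma Emb.ot_left {n} (H : Emb n) {p q r p' q' r' : Pt} (h : OT n p q r)
    (h' : (p', q', r') ∈ TriSet n) {a b c a' b' c' : ℝ} (ha : 0 ≤ a) (hb : 0 ≤ b) (hc : 0 ≤ c)
    (ha' : 0 ≤ a') (hb' : 0 ≤ b') (hc' : 0 ≤ c') (hs : a + b + c = 1) (hs' : a' + b' + c' = 1)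
    (e : a • p + b • q + c • r = a' • p' + b' • q' + c' • r') (F : Pt → ℝ) :
    a * F p + b * F q + c * F r = a' * F p' + b' * F q' + c' * F r' := by
  rcases h with h | h | h | h | h | h
  · exact H _ _ _ _ _ _ h h' _ _ _ _ _ _ ha hb hc ha' hb' hc' hs hs' e F
  · have := H _ _ _ _ _ _ h h' b a c _ _ _ hb ha hc ha' hb' hc' (by linarith) hs'
      (by rw [← e]; abel) F
    linarith
  · have := H _ _ _ _ _ _ h h' a c b _ _ _ ha hc hb ha' hb' hc' (by linarith) hs'
      (by rw [← e]; abel) F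
    linarith
  · have := H _ _ _ _ _ _ h h' b c a _ _ _ hb hc ha ha' hb' hc' (by linarith) hs'
      (by rw [← e]; abel) F
    linarith
  · have := H _ _ _ _ _ _ h h' c a b _ _ _ hc ha hb ha' hb' hc' (by linarith) hs'
      (by rw [← e]; abel) F
    linarith
  · have := H _ _ _ _ _ _ h h' c b a _ _ _ hc hb ha ha' hb' hc' (by linarith) hs'
      (by rw [← e]; abel) F
    linarith

lemma Emb.ot {n} (H : Emb n) {p q r p' q' r' : Pt} (h : OT n p q r)
    (h' : OT n p' q' r') {a b c a' b' c' : ℝ} (ha : 0 ≤ a) (hb : 0 ≤ b) (hc : 0 ≤ c)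
    (ha' : 0 ≤ a') (hb' : 0 ≤ b') (hc' : 0 ≤ c') (hs : a + b + c = 1) (hs' : a' + b' + c' = 1)
    (e : a • p + b • q + c • r = a' • p' + b' • q' + c' • r') (F : Pt → ℝ) :
    a * F p + b * F q + c * F r = a' * F p' + b' * F q' + c' * F r' := by
  rcases h' with h' | h' | h' | h' | h' | h'
  · exact H.ot_left h h' ha hb hc ha' hb' hc' hs hs' e F
  · have := H.ot_left h h' ha hb hc hb' ha' hc' hs (by linarith) (by rw [e]; abel) F
    linarith
  · have := H.ot_left h h' ha hb hc ha' hc' hb' hs (by linarith) (by rw [e]; abel) F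
    linarith
  · have := H.ot_left h h' ha hb hc hb' hc' ha' hs (by linarith) (by rw [e]; abel) F
    linarith
  · have := H.ot_left h h' ha hb hc hc' ha' hb' hs (by linarith) (by rw [e]; abel) F
    linarith
  · have := H.ot_left h h' ha hb hc hc' hb' ha' hs (by linarith) (by rw [e]; abel) F
    linarith

lemma comb_child (p q r : Pt) (a b c : ℝ) : a • p + b • mpt p q + c • bary p q r =
    (a + b / 2 + c / 3) • p + (b / 2 + c / 3) • q + (c / 3) • r := by
  simp only [mpt, bary]; module

/-- The layer-cake description of a point of the subdivision of an embedded complex. -/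
lemma Emb.layers {n} (H : Emb (n + 1)) {p q r p' q' r' : Pt} (h : OT (n + 1) p q r)
    (h' : OT (n + 1) p' q' r') {a b c a' b' c' : ℝ} (ha : 0 ≤ a) (hb : 0 ≤ b) (hc : 0 ≤ c)
    (ha' : 0 ≤ a') (hb' : 0 ≤ b') (hc' : 0 ≤ c') (hs : a + b + c = 1) (hs' : a' + b' + c' = 1)
    (e : a • p + b • mpt p q + c • bary p q r = a' • p' + b' • mpt p' q' + c' • bary p' q' r') :
    a = a' ∧ b = b' ∧ c = c' ∧ (0 < a → p = p') ∧
      (0 < b → (p = p' ∧ q = q') ∨ (p = q' ∧ q = p')) ∧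
      (0 < c → (p = p' ∧ q = q' ∧ r = r') ∨ (p = q' ∧ q = p' ∧ r = r') ∨
        (p = p' ∧ q = r' ∧ r = q') ∨ (p = q' ∧ q = r' ∧ r = p') ∨
        (p = r' ∧ q = p' ∧ r = q') ∨ (p = r' ∧ q = q' ∧ r = p')) := by
  rw [comb_child, comb_child] at e
  exact layer_cake h.ne12 h.ne13 h.ne23 h'.ne12 h'.ne13 h'.ne23 ha hb hc ha' hb' hc'
    (H.ot h h' (by positivity) (by positivity) (by positivity) (by positivity) (by positivity)
      (by positivity) (by linarith) (by linarith) e)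

lemma Emb.succ {n} (H : Emb (n + 1)) : Emb (n + 2) := by
  intro p q r p' q' r' h h' a b c a' b' c' ha hb hc ha' hb' hc' hs hs' e F
  obtain ⟨x, y, z, ho, ee⟩ := mem_TriSet_succ.1 h
  simp only [Prod.mk.injEq] at ee; obtain ⟨rfl, rfl, rfl⟩ := ee
  obtain ⟨x', y', z', ho', ee⟩ := mem_TriSet_succ.1 h'
  simp only [Prod.mk.injEq] at ee; obtain ⟨rfl, rfl, rfl⟩ := ee
  obtain ⟨rfl, rfl, rfl, k1, k2, k3⟩ := H.layers ho ho' ha hb hc ha' hb' hc' hs hs' e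
  congr 1
  · congr 1
    · rcases ha.eq_or_lt with h0 | h0
      · simp [← h0]
      · rw [k1 h0]
    · rcases hb.eq_or_lt with h0 | h0
      · simp [← h0]
      · rcases k2 h0 with ⟨rfl, rfl⟩ | ⟨rfl, rfl⟩
        · rfl
        · rw [mpt_comm]
  · rcases hc.eq_or_lt with h0 | h0
    · simp [← h0]
    · rcases k3 h0 with ⟨rfl, rfl, rfl⟩ | ⟨rfl, rfl, rfl⟩ | ⟨rfl, rfl, rfl⟩ | ⟨rfl, rfl, rfl⟩ |
        ⟨rfl, rfl, rfl⟩ | ⟨rfl, rfl, rfl⟩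
      · rfl
      all_goals
        congr 2
        simp only [bary]
        module

end Embedding

section Embedding2
open scoped Classical

/-- Positive part of the minimum. -/
def pm (u v : ℝ) : ℝ := max 0 (min u v)
lemma pm_l {u v : ℝ} (h : u ≤ 0) : pm u v = 0 := max_eq_left ((min_le_left _ _).trans h)
lemma pm_r {u v : ℝ} (h : v ≤ 0) : pm u v = 0 := max_eq_left ((min_le_right _ _).trans h)
lemma pm_ml {u v : ℝ} (h : 0 ≤ u) (h' : u ≤ v) : pm u v = u := by
  rw [pm, min_eq_left h', max_eq_right h]
lemma pm_mr {u v : ℝ} (h : 0 ≤ v) (h' : v ≤ u) : pm u v = v := by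
  rw [pm, min_eq_right h', max_eq_right h]

/-- Piecewise linear interpolation of `F` on the hexagon, as a combination of six tent functions. -/
def hexInterp (F : Pt → ℝ) (x y : ℝ) : ℝ :=
  F (0, 0) + (F (hexCorner 0) - F (0, 0)) * pm x (x + y) + (F (hexCorner 1) - F (0, 0)) * pm (x + y) y
    + (F (hexCorner 2) - F (0, 0)) * pm y (-x) + (F (hexCorner 3) - F (0, 0)) * pm (-x) (-x - y)
    + (F (hexCorner 4) - F (0, 0)) * pm (-x - y) (-y) + (F (hexCorner 5) - F (0, 0)) * pm (-y) x

lemma hexInterp_eq {p q r : Pt} (h : (p, q, r) ∈ TriSet 1) {a b c : ℝ} (ha : 0 ≤ a) (hb : 0 ≤ b)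
    (hs : a + b + c = 1) (F : Pt → ℝ) : a * F p + b * F q + c * F r =
      hexInterp F (cx (a • p + b • q + c • r)) (cy (a • p + b • q + c • r)) := by
  obtain rfl : c = 1 - a - b := by linarith
  rcases mem_TriSet_one.1 h with h | h | h | h | h | h <;>
      (simp only [Prod.mk.injEq] at h; obtain ⟨rfl, rfl, rfl⟩ := h; simp [hexInterp])
  all_goals
    ring_nf
    simp only [pm_ml ha (show a ≤ a + b by linarith), pm_mr hb (show b ≤ a + b by linarith),
      pm_r (u := b) (show -a ≤ 0 by linarith), pm_l (v := -a - b) (show -a ≤ 0 by linarith),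
      pm_l (v := -b) (show -a - b ≤ 0 by linarith), pm_l (v := a) (show -b ≤ 0 by linarith)]
    ring

lemma Emb.one : Emb 1 := by
  intro p q r p' q' r' h h' a b c a' b' c' ha hb hc ha' hb' hc' hs hs' e F
  rw [hexInterp_eq h ha hb hs, hexInterp_eq h' ha' hb' hs', e]

/-- Every `T_n` is geometrically embedded in the plane. -/
lemma emb (n : ℕ) : Emb (n + 1) := by
  induction n with
  | zero => exact Emb.one
  | succ n ih => exact ih.succ

end Embedding2

/-! ### Extending functions over a subdivision -/

section Extension
set_option linter.unusedSimpArgs false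
open scoped Classical

/-- Functions on the hexagon may be prescribed cell by cell on the subdivision, provided that the
prescription `V p q r a b c` at the point `a • p + b • mpt p q + c • bary p q r` only depends on
the part of the flag `p, {p, q}, {p, q, r}` that carries positive weight. -/
lemma exists_extension (n : ℕ) (V : Pt → Pt → Pt → ℝ → ℝ → ℝ → ℝ)
    (h12 : ∀ p q r b c, OT (n + 1) p q r → 0 ≤ b → 0 ≤ c → b + c = 1 →
      V p q r 0 b c = V q p r 0 b c)
    (h23 : ∀ p q r a c, OT (n + 1) p q r → 0 ≤ a → 0 ≤ c → a + c = 1 →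
      V p q r a 0 c = V p r q a 0 c)
    (h3 : ∀ p q r r' a b, OT (n + 1) p q r → OT (n + 1) p q r' → 0 ≤ a → 0 ≤ b → a + b = 1 →
      V p q r a b 0 = V p q r' a b 0)
    (h1 : ∀ p q r q' r', OT (n + 1) p q r → OT (n + 1) p q' r' → V p q r 1 0 0 = V p q' r' 1 0 0) :
    ∃ F : Pt → ℝ, ∀ p q r a b c, OT (n + 1) p q r → 0 ≤ a → 0 ≤ b → 0 ≤ c → a + b + c = 1 →
      F (a • p + b • mpt p q + c • bary p q r) = V p q r a b c := by
  let P : Pt → Pt × Pt × Pt × ℝ × ℝ × ℝ → Prop := fun x s =>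
    OT (n + 1) s.1 s.2.1 s.2.2.1 ∧ 0 ≤ s.2.2.2.1 ∧ 0 ≤ s.2.2.2.2.1 ∧ 0 ≤ s.2.2.2.2.2 ∧
    s.2.2.2.1 + s.2.2.2.2.1 + s.2.2.2.2.2 = 1 ∧
    x = s.2.2.2.1 • s.1 + s.2.2.2.2.1 • mpt s.1 s.2.1 + s.2.2.2.2.2 • bary s.1 s.2.1 s.2.2.1
  let F : Pt → ℝ := fun x => if h : ∃ s, P x s then
    V h.choose.1 h.choose.2.1 h.choose.2.2.1 h.choose.2.2.2.1 h.choose.2.2.2.2.1 h.choose.2.2.2.2.2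
    else 0
  refine ⟨F, fun p q r a b c ho ha hb hc hs => ?_⟩
  have hex : ∃ s, P (a • p + b • mpt p q + c • bary p q r) s :=
    ⟨(p, q, r, a, b, c), ho, ha, hb, hc, hs, rfl⟩
  have hF : F (a • p + b • mpt p q + c • bary p q r) = _ := dif_pos hex
  rw [hF]
  obtain ⟨ho', ha', hb', hc', hs', e⟩ := hex.choose_spec
  set s := hex.choose
  obtain ⟨p', q', r', a', b', c'⟩ := s
  simp only at ho' ha' hb' hc' hs' e ⊢
  obtain ⟨ea, eb, ec, k1, k2, k3⟩ := (emb n).layers ho ho' ha hb hc ha' hb' hc' hs hs' e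
  subst ea eb ec
  symm
  rcases hc.eq_or_lt with h0 | h0
  · subst h0
    rcases hb.eq_or_lt with h0' | h0'
    · subst h0'
      obtain rfl : a = 1 := by linarith
      obtain rfl := k1 one_pos
      exact h1 _ _ _ _ _ ho ho'
    · rcases k2 h0' with ⟨rfl, rfl⟩ | ⟨rfl, rfl⟩
      · exact h3 _ _ _ _ _ _ ho ho' ha hb (by linarith)
      · rcases ha.eq_or_lt with h0'' | h0''
        · subst h0''
          obtain rfl : b = 1 := by linarith
          rw [h12 p q r 1 0 ho (by norm_num) le_rfl (by norm_num)]
          exact h3 _ _ _ _ _ _ ho.swap12 ho' le_rfl (by norm_num) (by norm_num)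
        · exact absurd (k1 h0'') ho.ne12
  · -- with `c > 0` the flags share their triangle; they differ by the transpositions that fix
    -- the lower faces carrying positive weight
    have t12 : ∀ x y z, OT (n + 1) x y z → a = 0 → V x y z a b c = V y x z a b c := by
      rintro x y z hh rfl; exact h12 _ _ _ _ _ hh hb hc (by linarith)
    have t23 : ∀ x y z, OT (n + 1) x y z → b = 0 → V x y z a b c = V x z y a b c := by
      rintro x y z hh rfl; exact h23 _ _ _ _ _ hh ha hc (by linarith)
    have n12 := ho.ne12
    have n13 := ho.ne13
    have n23 := ho.ne23
    have za : p ≠ p' → a = 0 := fun hh => by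
      by_contra h; exact hh (k1 (lt_of_le_of_ne ha (Ne.symm h)))
    have zb : ¬ ((p = p' ∧ q = q') ∨ (p = q' ∧ q = p')) → b = 0 := fun hh => by
      by_contra h; exact hh (k2 (lt_of_le_of_ne hb (Ne.symm h)))
    rcases k3 h0 with ⟨rfl, rfl, rfl⟩ | ⟨rfl, rfl, rfl⟩ | ⟨rfl, rfl, rfl⟩ | ⟨rfl, rfl, rfl⟩ |
        ⟨rfl, rfl, rfl⟩ | ⟨rfl, rfl, rfl⟩
    · rfl
    · exact t12 _ _ _ ho (za n12)
    · exact t23 _ _ _ ho (zb (by simp [n12, n13, n23, n12.symm, n13.symm, n23.symm]))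
    · have b0 := zb (by simp [n12, n13, n23, n12.symm, n13.symm, n23.symm])
      have a0 := za n13
      rw [t23 _ _ _ ho b0, t12 _ _ _ ho.swap23 a0]
    · have b0 := zb (by simp [n12, n13, n23, n12.symm, n13.symm, n23.symm])
      have a0 := za n12
      rw [t12 _ _ _ ho a0, t23 _ _ _ ho.swap12 b0]
    · have b0 := zb (by simp [n12, n13, n23, n12.symm, n13.symm, n23.symm])
      have a0 := za n13
      rw [t12 _ _ _ ho a0, t23 _ _ _ ho.swap12 b0, t12 _ _ _ ho.swap12.swap23 a0]

/-- Vertices, midpoints of edges and barycenters of triangles of `T_n` are pairwise distinct. -/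
lemma OT.vertex_ne_mpt {n p q r p' q' r'} (h : OT (n + 1) p q r) (h' : OT (n + 1) p' q' r') :
    p ≠ mpt p' q' := by
  intro e
  have := ((emb n).layers h h' (a := 1) (b := 0) (c := 0) (a' := 0) (b' := 1) (c' := 0)
    (by norm_num) (by norm_num) (by norm_num) (by norm_num) (by norm_num) (by norm_num)
    (by norm_num) (by norm_num) (by simpa using e)).1
  norm_num at this

lemma OT.vertex_ne_bary {n p q r p' q' r'} (h : OT (n + 1) p q r) (h' : OT (n + 1) p' q' r') :
    p ≠ bary p' q' r' := by
  intro e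
  have := ((emb n).layers h h' (a := 1) (b := 0) (c := 0) (a' := 0) (b' := 0) (c' := 1)
    (by norm_num) (by norm_num) (by norm_num) (by norm_num) (by norm_num) (by norm_num)
    (by norm_num) (by norm_num) (by simpa using e)).1
  norm_num at this

lemma OT.mpt_ne_bary {n p q r p' q' r'} (h : OT (n + 1) p q r) (h' : OT (n + 1) p' q' r') :
    mpt p q ≠ bary p' q' r' := by
  intro e
  have := ((emb n).layers h h' (a := 0) (b := 1) (c := 0) (a' := 0) (b' := 0) (c' := 1)
    (by norm_num) (by norm_num) (by norm_num) (by norm_num) (by norm_num) (by norm_num)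
    (by norm_num) (by norm_num) (by simpa using e)).2.1
  norm_num at this

/-- Two triangles with a common edge that lie on the same side of it coincide. -/
lemma OT.eq_of_det {n p q r r'} (h : OT (n + 1) p q r) (h' : OT (n + 1) p q r')
    (hd : 0 < det3 p q r * det3 p q r') : r = r' := by
  by_contra hne
  have d0 := h.det_ne
  have d0' := h'.det_ne
  -- `r' = α p + β q + γ r` with `γ > 0`
  obtain ⟨γ, hγ⟩ : ∃ γ, γ = det3 p q r' / det3 p q r := ⟨_, rfl⟩
  have γ0 : 0 < γ := by
    rw [hγ]
    rcases mul_pos_iff.1 hd with ⟨h1, h2⟩ | ⟨h1, h2⟩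
    · exact div_pos h2 h1
    · exact div_pos_of_neg_of_neg h2 h1
  obtain ⟨β, hβ⟩ : ∃ β, β = det3 p r' r / det3 p q r := ⟨_, rfl⟩
  have er : r' = (1 - β - γ) • p + β • q + γ • r := by
    apply pt_ext
    · simp only [cx_add, cx_smul, hβ, hγ]; field_simp; simp only [det3]; ring
    · simp only [cy_add, cy_smul, hβ, hγ]; field_simp; simp only [det3]; ring
  obtain ⟨ε, e0, e1, eb, eg, ea⟩ : ∃ ε : ℝ, 0 < ε ∧ ε ≤ 1 ∧ 0 ≤ (1 - ε) / 2 + ε * β ∧ ε * γ ≤ 1 ∧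
      0 ≤ (1 - ε) / 2 + ε * (1 - β - γ) := by
    refine ⟨1 / (4 * (1 + |β| + γ)), by positivity, ?_, ?_, ?_, ?_⟩ <;>
      have hb := abs_nonneg β <;> have hb1 := neg_abs_le β <;> have hb2 := le_abs_self β
    · rw [div_le_one (by positivity)]; linarith
    all_goals field_simp; nlinarith
  have key := (emb n).ot h' h (a := (1 - ε) / 2) (b := (1 - ε) / 2) (c := ε)
    (a' := (1 - ε) / 2 + ε * (1 - β - γ)) (b' := (1 - ε) / 2 + ε * β) (c' := ε * γ)
    (by linarith) (by linarith) e0.le ea eb (by positivity) (by ring) (by ring)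
    (by rw [er]; module) (fun x => if x = r then 1 else 0)
  simp only [h.ne13, h.ne23, if_false, Ne.symm hne, if_true] at key
  have : 0 < ε * γ := by positivity
  simp at key
  rcases key with rfl | rfl <;> linarith

end Extension

/-! ### Sums over ordered triangles -/

section Sums
open scoped Classical

lemma TriSet_finite (n : ℕ) : (TriSet n).Finite := by
  induction n using Nat.strongRecOn with
  | _ n ih =>
    match n with
    | 0 => simp [TriSet]
    | 1 =>
      have : TriSet 1 = Set.range fun i : Fin 6 =>
          (hexCorner i, hexCorner (i + 1), ((0:ℝ), (0:ℝ))) := by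
        ext t; simp only [TriSet, Set.mem_ofPred_eq, Set.mem_range, eq_comm]
      rw [this]; exact Set.finite_range _
    | n + 2 =>
      rw [TriSet]
      refine Set.Finite.biUnion (ih (n + 1) (by omega)) fun t _ => ?_
      unfold children; exact Set.toFinite _

lemma OT_finite (n : ℕ) : {x : Pt × Pt × Pt | OT n x.1 x.2.1 x.2.2}.Finite := by
  have h := TriSet_finite n
  have : {x : Pt × Pt × Pt | OT n x.1 x.2.1 x.2.2} ⊆
      TriSet n ∪ (fun t => (t.2.1, t.1, t.2.2)) '' TriSet n ∪
        (fun t => (t.1, t.2.2, t.2.1)) '' TriSet n ∪ (fun t => (t.2.2, t.1, t.2.1)) '' TriSet n ∪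
        (fun t => (t.2.1, t.2.2, t.1)) '' TriSet n ∪
        (fun t => (t.2.2, t.2.1, t.1)) '' TriSet n := by
    rintro ⟨p, q, r⟩ hx
    rcases hx with hx | hx | hx | hx | hx | hx
    · exact .inl (.inl (.inl (.inl (.inl hx))))
    · exact .inl (.inl (.inl (.inl (.inr ⟨_, hx, rfl⟩))))
    · exact .inl (.inl (.inl (.inr ⟨_, hx, rfl⟩)))
    · exact .inl (.inl (.inr ⟨_, hx, rfl⟩))
    · exact .inl (.inr ⟨_, hx, rfl⟩)
    · exact .inr ⟨_, hx, rfl⟩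
  refine Set.Finite.subset ?_ this
  exact ((((h.union (h.image _)).union (h.image _)).union (h.image _)).union (h.image _)).union
    (h.image _)

/-- The finite set of all orderings of the vertices of the triangles of `T_n`. -/
def OF (n : ℕ) : Finset (Pt × Pt × Pt) := (OT_finite n).toFinset

@[simp] lemma mem_OF {n : ℕ} {p q r : Pt} : (p, q, r) ∈ OF n ↔ OT n p q r := by simp [OF]

/-- Sum of a function of three variables over their orderings. -/
def sym6 {E : Type} (K : E → E → E → ℝ) (p q r : E) : ℝ :=
  K p q r + K q p r + K p r q + K q r p + K r p q + K r q p

/-- The six orderings of a triple. -/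
def perm6 (x : Pt × Pt × Pt) (i : Fin 6) : Pt × Pt × Pt :=
  ![(x.1, x.2.1, x.2.2), (x.2.1, x.1, x.2.2), (x.1, x.2.2, x.2.1), (x.2.1, x.2.2, x.1),
    (x.2.2, x.1, x.2.1), (x.2.2, x.2.1, x.1)] i

lemma sum_perm6 (K : Pt → Pt → Pt → ℝ) (p q r : Pt) :
    ∑ i, K (perm6 (p, q, r) i).1 (perm6 (p, q, r) i).2.1 (perm6 (p, q, r) i).2.2 =
      sym6 K p q r := by
  simp [Fin.sum_univ_six, perm6, sym6]

lemma OT_perm6 {n p q r} (h : (p, q, r) ∈ TriSet n) (i : Fin 6) : perm6 (p, q, r) i ∈ OF n := by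
  have h : OT n p q r := Or.inl h
  fin_cases i <;> simp [perm6]
  exacts [h, h.swap12, h.swap23, h.rot, h.rot', h.swap13]

lemma exists_perm6 {n : ℕ} {x : Pt × Pt × Pt} (h : x ∈ OF n) :
    ∃ t ∈ TriSet n, ∃ i, perm6 t i = x := by
  obtain ⟨p, q, r⟩ := x
  rcases mem_OF.1 h with h | h | h | h | h | h
  exacts [⟨_, h, 0, rfl⟩, ⟨_, h, 1, rfl⟩, ⟨_, h, 2, rfl⟩, ⟨_, h, 4, rfl⟩, ⟨_, h, 3, rfl⟩,
    ⟨_, h, 5, rfl⟩]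

lemma flag_injective {p q r p' q' r' : Pt} (h1 : p = p') (h2 : mpt p q = mpt p' q')
    (h3 : bary p q r = bary p' q' r') : p = p' ∧ q = q' ∧ r = r' := by
  subst h1
  have hq : q = q' := by
    have : q = (2 : ℝ) • mpt p q - p := by simp [mpt]
    rw [this, h2]; simp [mpt]
  subst hq
  refine ⟨rfl, rfl, ?_⟩
  have : r = (3 : ℝ) • bary p q r - p - q := by simp only [bary]; module
  rw [this, h3]; simp only [bary]; module

/-- Sums over the orderings of the triangles of `T_{n+2}` reduce to sums over `T_{n+1}`. -/
lemma sum_OF_succ (n : ℕ) (K : Pt → Pt → Pt → ℝ) :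
    ∑ x ∈ OF (n + 2), K x.1 x.2.1 x.2.2 =
      ∑ x ∈ OF (n + 1), sym6 K x.1 (mpt x.1 x.2.1) (bary x.1 x.2.1 x.2.2) := by
  simp only [← sum_perm6]
  rw [← Finset.sum_product (OF (n + 1)) Finset.univ (fun y =>
    K (perm6 (y.1.1, mpt y.1.1 y.1.2.1, bary y.1.1 y.1.2.1 y.1.2.2) y.2).1
    (perm6 (y.1.1, mpt y.1.1 y.1.2.1, bary y.1.1 y.1.2.1 y.1.2.2) y.2).2.1
    (perm6 (y.1.1, mpt y.1.1 y.1.2.1, bary y.1.1 y.1.2.1 y.1.2.2) y.2).2.2)]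
  symm
  refine Finset.sum_nbij
    (fun y => perm6 (y.1.1, mpt y.1.1 y.1.2.1, bary y.1.1 y.1.2.1 y.1.2.2) y.2) ?_ ?_ ?_ ?_
  · rintro ⟨⟨p, q, r⟩, i⟩ h
    have h : OT (n + 1) p q r := by simpa using h
    exact OT_perm6 h.child i
  · rintro ⟨⟨p, q, r⟩, i⟩ h ⟨⟨p', q', r'⟩, j⟩ h' e
    have h : OT (n + 1) p q r := by simpa using h
    have h' : OT (n + 1) p' q' r' := by simpa using h'
    have a1 := h.vertex_ne_mpt h'
    have a2 := h.vertex_ne_bary h'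
    have a3 := h.mpt_ne_bary h'
    have b1 := h'.vertex_ne_mpt h
    have b2 := h'.vertex_ne_bary h
    have b3 := h'.mpt_ne_bary h
    have key : i = j ∧ p = p' ∧ mpt p q = mpt p' q' ∧ bary p q r = bary p' q' r' := by
      fin_cases i <;> fin_cases j <;> simp only [perm6, Matrix.cons_val, Prod.mk.injEq,
        Fin.mk_one, Fin.zero_eta, Fin.reduceFinMk] at e <;>
        obtain ⟨e1, e2, e3⟩ := e <;>
        first
        | exact absurd e1 a1 | exact absurd e1 a2 | exact absurd e1 a3
        | exact absurd e2 a1 | exact absurd e2 a2 | exact absurd e2 a3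
        | exact absurd e3 a1 | exact absurd e3 a2 | exact absurd e3 a3
        | exact absurd e1.symm b1 | exact absurd e1.symm b2 | exact absurd e1.symm b3
        | exact absurd e2.symm b1 | exact absurd e2.symm b2 | exact absurd e2.symm b3
        | exact ⟨rfl, by assumption, by assumption, by assumption⟩
    obtain ⟨rfl, e1, e2, e3⟩ := key
    obtain ⟨rfl, rfl, rfl⟩ := flag_injective e1 e2 e3
    rfl
  · intro x hx
    obtain ⟨t, ht, i, rfl⟩ := exists_perm6 hx
    obtain ⟨p, q, r, ho, rfl⟩ := mem_TriSet_succ.1 ht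
    exact ⟨((p, q, r), i), by simpa using ho, rfl⟩
  · intros; rfl

lemma hexCorner_ne_zero (i : Fin 6) : hexCorner i ≠ ((0 : ℝ), (0 : ℝ)) := by
  intro h
  have h1 := congrArg cx h
  have h2 := congrArg cy h
  fin_cases i <;> simp at h1 h2

lemma hexCorner_inj (i j : Fin 6) (h : hexCorner i = hexCorner j) : i = j := by
  have h1 := congrArg cx h
  have h2 := congrArg cy h
  fin_cases i <;> fin_cases j <;> simp at h1 h2 ⊢ <;>
    first | (norm_num at h1; done) | (norm_num at h2; done)

lemma hexCorner_succ_ne_zero (i : Fin 6) : hexCorner (i + 1) ≠ ((0 : ℝ), (0 : ℝ)) := by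
  intro h
  have h1 := congrArg cx h
  have h2 := congrArg cy h
  fin_cases i <;> simp at h1 h2

lemma hexCorner_twist (i j : Fin 6) (h : hexCorner i = hexCorner (j + 1))
    (h' : hexCorner (i + 1) = hexCorner j) : False := by
  have h1 := congrArg cx h
  have h2 := congrArg cy h
  have h3 := congrArg cx h'
  have h4 := congrArg cy h'
  fin_cases i <;> fin_cases j <;> simp at h1 h2 h3 h4

lemma perm6_eq {p q p' q' z : Pt} {k l : Fin 6} (a1 : z ≠ p') (a2 : z ≠ q')
    (e : perm6 (p, q, z) k = perm6 (p', q', z) l) :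
    (k = l ∧ p = p') ∨ (p = q' ∧ q = p') := by
  fin_cases k <;> fin_cases l <;> simp only [perm6, Matrix.cons_val, Prod.mk.injEq,
    Fin.mk_one, Fin.zero_eta, Fin.reduceFinMk] at e <;>
    obtain ⟨e1, e2, e3⟩ := e <;>
    first
    | exact absurd e1 a1 | exact absurd e2 a1 | exact absurd e3 a1
    | exact absurd e1 a2 | exact absurd e2 a2 | exact absurd e3 a2
    | exact Or.inl ⟨rfl, by assumption⟩
    | exact Or.inr ⟨by assumption, by assumption⟩

/-- Sums over the orderings of the triangles of `T_1`. -/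
lemma sum_OF_one (K : Pt → Pt → Pt → ℝ) :
    ∑ x ∈ OF 1, K x.1 x.2.1 x.2.2 =
      ∑ i : Fin 6, sym6 K (hexCorner i) (hexCorner (i + 1)) ((0 : ℝ), (0 : ℝ)) := by
  simp only [← sum_perm6]
  rw [← Finset.sum_product Finset.univ Finset.univ (fun y : Fin 6 × Fin 6 =>
    K (perm6 (hexCorner y.1, hexCorner (y.1 + 1), ((0 : ℝ), (0 : ℝ))) y.2).1
    (perm6 (hexCorner y.1, hexCorner (y.1 + 1), ((0 : ℝ), (0 : ℝ))) y.2).2.1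
    (perm6 (hexCorner y.1, hexCorner (y.1 + 1), ((0 : ℝ), (0 : ℝ))) y.2).2.2)]
  symm
  refine Finset.sum_nbij (fun y : Fin 6 × Fin 6 =>
    perm6 (hexCorner y.1, hexCorner (y.1 + 1), ((0 : ℝ), (0 : ℝ))) y.2) ?_ ?_ ?_ ?_
  · rintro ⟨i, j⟩ -
    exact OT_perm6 (by simp only [TriSet]; exact ⟨i, rfl⟩) j
  · rintro ⟨i, k⟩ - ⟨j, l⟩ - e
    have a2 := hexCorner_ne_zero j
    have b2 := hexCorner_succ_ne_zero j
    have key : k = l ∧ i = j := by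
      rcases perm6_eq a2.symm b2.symm e with ⟨h1, h2⟩ | ⟨h1, h2⟩
      · exact ⟨h1, hexCorner_inj _ _ h2⟩
      · exact (hexCorner_twist _ _ h1 h2).elim
    obtain ⟨rfl, rfl⟩ := key
    rfl
  · intro x hx
    obtain ⟨t, ht, j, rfl⟩ := exists_perm6 hx
    simp only [TriSet] at ht
    obtain ⟨i, rfl⟩ := ht
    exact ⟨(i, j), by simp, rfl⟩
  · intros; rfl

lemma sum_OF_one' (K : Pt → Pt → Pt → ℝ) :
    ∑ x ∈ OF 1, K x.1 x.2.1 x.2.2 =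
      sym6 K (hexCorner 0) (hexCorner 1) 0 + sym6 K (hexCorner 1) (hexCorner 2) 0 +
      sym6 K (hexCorner 2) (hexCorner 3) 0 + sym6 K (hexCorner 3) (hexCorner 4) 0 +
      sym6 K (hexCorner 4) (hexCorner 5) 0 + sym6 K (hexCorner 5) (hexCorner 6) 0 := by
  rw [sum_OF_one, Fin.sum_univ_six]
  rfl

lemma sum_OF_swap12 (n : ℕ) (K : Pt → Pt → Pt → ℝ) :
    ∑ x ∈ OF n, K x.2.1 x.1 x.2.2 = ∑ x ∈ OF n, K x.1 x.2.1 x.2.2 := by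
  refine Finset.sum_nbij' (fun x => (x.2.1, x.1, x.2.2)) (fun x => (x.2.1, x.1, x.2.2)) ?_ ?_ ?_ ?_ ?_
  · rintro ⟨p, q, r⟩ h; exact mem_OF.2 (mem_OF.1 h).swap12
  · rintro ⟨p, q, r⟩ h; exact mem_OF.2 (mem_OF.1 h).swap12
  all_goals intros; rfl

lemma sum_OF_swap23 (n : ℕ) (K : Pt → Pt → Pt → ℝ) :
    ∑ x ∈ OF n, K x.1 x.2.2 x.2.1 = ∑ x ∈ OF n, K x.1 x.2.1 x.2.2 := by
  refine Finset.sum_nbij' (fun x => (x.1, x.2.2, x.2.1)) (fun x => (x.1, x.2.2, x.2.1)) ?_ ?_ ?_ ?_ ?_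
  · rintro ⟨p, q, r⟩ h; exact mem_OF.2 (mem_OF.1 h).swap23
  · rintro ⟨p, q, r⟩ h; exact mem_OF.2 (mem_OF.1 h).swap23
  all_goals intros; rfl

end Sums

/-! ### Refined potentials and submultiplicativity -/

section Refinement
open scoped Classical

variable {E E' : Type} [AddCommGroup E] [Module ℝ E] [AddCommGroup E'] [Module ℝ E']

/-- The operator that replaces a function of an ordered triangle by its sum over the orderings of
the child triangle (vertex, midpoint, barycenter) of the flag. -/
def Ch (K : E → E → E → ℝ) (p q r : E) : ℝ :=
  sym6 K p ((2:ℝ)⁻¹ • (p + q)) ((3:ℝ)⁻¹ • (p + q + r))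

lemma Ch_add (K K' : E → E → E → ℝ) : Ch (K + K') = Ch K + Ch K' := by
  funext p q r; simp only [Ch, sym6, Pi.add_apply]; ring

lemma Ch_smul (s : ℝ) (K : E → E → E → ℝ) : Ch (s • K) = s • Ch K := by
  funext p q r; simp only [Ch, sym6, Pi.smul_apply, smul_eq_mul]; ring

lemma Ch_iter_add (k : ℕ) (K K' : E → E → E → ℝ) : Ch^[k] (K + K') = Ch^[k] K + Ch^[k] K' := by
  induction k generalizing K K' with
  | zero => rfl
  | succ k ih => simp only [Function.iterate_succ_apply, Ch_add, ih]

lemma Ch_iter_smul (k : ℕ) (s : ℝ) (K : E → E → E → ℝ) : Ch^[k] (s • K) = s • Ch^[k] K := by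
  induction k generalizing K with
  | zero => rfl
  | succ k ih => simp only [Function.iterate_succ_apply, Ch_smul, ih]

lemma Ch_iter_map (k : ℕ) (φ : E →ₗ[ℝ] E') (K : E' → E' → E' → ℝ) (a b c : E) :
    Ch^[k] (fun x y z => K (φ x) (φ y) (φ z)) a b c = Ch^[k] K (φ a) (φ b) (φ c) := by
  induction k generalizing K with
  | zero => rfl
  | succ k ih =>
    simp only [Function.iterate_succ_apply, ← ih]
    have : (Ch fun x y z => K (φ x) (φ y) (φ z)) = fun x y z => Ch K (φ x) (φ y) (φ z) := by
      funext x y z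
      simp only [Ch, sym6, map_add, map_smul]
    rw [this]

lemma Ch_iter_mono (k : ℕ) {S : Set E} (hS : Convex ℝ S) {K K' : E → E → E → ℝ}
    (h : ∀ x ∈ S, ∀ y ∈ S, ∀ z ∈ S, K x y z ≤ K' x y z) :
    ∀ x ∈ S, ∀ y ∈ S, ∀ z ∈ S, Ch^[k] K x y z ≤ Ch^[k] K' x y z := by
  induction k generalizing K K' with
  | zero => exact h
  | succ k ih =>
    simp only [Function.iterate_succ_apply]
    apply ih
    intro x hx y hy z hz
    have hm : (2:ℝ)⁻¹ • (x + y) ∈ S := by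
      rw [smul_add]; exact hS hx hy (by norm_num) (by norm_num) (by norm_num)
    have hb : (3:ℝ)⁻¹ • (x + y + z) ∈ S := by
      have : (3:ℝ)⁻¹ • (x + y + z) = (2/3:ℝ) • ((2:ℝ)⁻¹ • (x + y)) + (1/3:ℝ) • z := by module
      rw [this]; exact hS hm hz (by norm_num) (by norm_num) (by norm_num)
    simp only [Ch, sym6]
    gcongr <;> apply h <;> assumption

lemma Ch_iter_nonneg (k : ℕ) {K : E → E → E → ℝ} (h : ∀ x y z, 0 ≤ K x y z) :
    ∀ x y z, 0 ≤ Ch^[k] K x y z := by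
  induction k generalizing K with
  | zero => exact h
  | succ k ih =>
    simp only [Function.iterate_succ_apply]
    apply ih
    intro x y z
    simp only [Ch, sym6]
    have := h x ((2:ℝ)⁻¹ • (x + y)) ((3:ℝ)⁻¹ • (x + y + z))
    have := h ((2:ℝ)⁻¹ • (x + y)) x ((3:ℝ)⁻¹ • (x + y + z))
    have := h x ((3:ℝ)⁻¹ • (x + y + z)) ((2:ℝ)⁻¹ • (x + y))
    have := h ((2:ℝ)⁻¹ • (x + y)) ((3:ℝ)⁻¹ • (x + y + z)) x
    have := h ((3:ℝ)⁻¹ • (x + y + z)) x ((2:ℝ)⁻¹ • (x + y))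
    have := h ((3:ℝ)⁻¹ • (x + y + z)) ((2:ℝ)⁻¹ • (x + y)) x
    positivity

lemma sum_OF_iter (m k : ℕ) (K : Pt → Pt → Pt → ℝ) :
    ∑ x ∈ OF (m + 1 + k), K x.1 x.2.1 x.2.2 =
      ∑ x ∈ OF (m + 1), Ch^[k] K x.1 x.2.1 x.2.2 := by
  induction k generalizing K with
  | zero => rfl
  | succ k ih =>
    rw [Function.iterate_succ_apply, ← ih]
    have : m + 1 + (k + 1) = (m + k) + 2 := by ring
    rw [this, sum_OF_succ]
    have : m + 1 + k = m + k + 1 := by ring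
    rw [this]
    rfl

end Refinement

section Energies
open scoped Classical

/-- The energy of a function on the vertices of `T_n`, summed over all oriented edges of all
triangles (so boundary edges are counted half as often as interior ones). -/
def DT (n : ℕ) (f : Pt → ℝ) : ℝ := ∑ x ∈ OF n, (f x.1 - f x.2.1) ^ 2

/-- The energy of a function on the edges and triangles of `T_n`, each incidence being counted
twice. -/
def DH (n : ℕ) (g : Set Pt → ℝ) : ℝ :=
  ∑ x ∈ OF n, (g {x.1, x.2.1} - g {x.1, x.2.1, x.2.2}) ^ 2

/-- Admissible potentials for the resistance between opposite sides of the hexagon. -/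
def TestT (f : Pt → ℝ) : Prop := (∀ p ∈ hexSide 2, f p = 0) ∧ ∀ p ∈ hexSide 5, f p = 1

/-- The side `i` is covered by the edges of `T_n` contained in it. -/
lemma side_cover (n : ℕ) (i : Fin 6) (x : Pt) (hx : x ∈ hexSide i) :
    ∃ p q r, OT (n + 1) p q r ∧ p ∈ hexSide i ∧ q ∈ hexSide i ∧ x ∈ segment ℝ p q := by
  induction n with
  | zero =>
    refine ⟨hexCorner i, hexCorner (i + 1), ((0:ℝ), (0:ℝ)), Or.inl ?_, left_mem_segment _ _ _,
      right_mem_segment _ _ _, hx⟩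
    simp only [TriSet]
    exact ⟨i, rfl⟩
  | succ n ih =>
    have key : ∀ p q r, OT (n + 1) p q r → p ∈ hexSide i → q ∈ hexSide i →
        (∃ a b : ℝ, b ≤ a ∧ 0 ≤ a ∧ 0 ≤ b ∧ a + b = 1 ∧ a • p + b • q = x) →
        ∃ p q r, OT (n + 2) p q r ∧ p ∈ hexSide i ∧ q ∈ hexSide i ∧ x ∈ segment ℝ p q := by
      rintro p q r h hp hq ⟨a, b, hab, ha, hb, hs, rfl⟩
      refine ⟨p, mpt p q, bary p q r, OT.of_mem h.child, hp, ?_, ?_⟩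
      · rw [mpt, smul_add]
        exact convex_segment _ _ hp hq (by norm_num) (by norm_num) (by norm_num)
      · exact ⟨a - b, 2 * b, by linarith, by linarith, by linarith, by simp only [mpt]; module⟩
    obtain ⟨p, q, r, h, hp, hq, a, b, ha, hb, hs, rfl⟩ := ih
    rcases le_total b a with hab | hab
    · exact key p q r h hp hq ⟨a, b, hab, ha, hb, hs, rfl⟩
    · exact key q p r h.swap12 hq hp ⟨b, a, hab, hb, ha, by linarith, by rw [add_comm]⟩

/-- Every point of the side `i` lies on the half `[p, mpt p q]` of an edge of `T_n` contained in
the side. -/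
lemma side_cover_half (n : ℕ) (i : Fin 6) (x : Pt) (hx : x ∈ hexSide i) :
    ∃ (p q r : Pt) (a b : ℝ), OT (n + 1) p q r ∧ p ∈ hexSide i ∧ q ∈ hexSide i ∧ 0 ≤ a ∧ 0 ≤ b ∧ a + b = 1 ∧
      x = a • p + b • mpt p q + (0 : ℝ) • bary p q r := by
  obtain ⟨p, q, r, h, hp, hq, a, b, ha, hb, hs, rfl⟩ := side_cover n i x hx
  rcases le_total b a with hab | hab
  · refine ⟨p, q, r, a - b, 2 * b, h, hp, hq, by linarith, by linarith, by linarith, ?_⟩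
    simp only [mpt]; module
  · refine ⟨q, p, r, b - a, 2 * a, h.swap12, hq, hp, by linarith, by linarith, by linarith, ?_⟩
    simp only [mpt]; module

end Energies

section Submult
open scoped Classical

/-- Truncation to `[0, 1]`. -/
def cl (t : ℝ) : ℝ := max 0 (min 1 t)
lemma cl_nonneg (t : ℝ) : 0 ≤ cl t := le_max_left _ _
lemma cl_le_one (t : ℝ) : cl t ≤ 1 := max_le zero_le_one (min_le_left _ _)
lemma cl_one : cl 1 = 1 := by simp [cl]
lemma cl_zero : cl 0 = 0 := by simp [cl]
lemma cl_lip (s t : ℝ) : (cl s - cl t) ^ 2 ≤ (s - t) ^ 2 := by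
  rw [sq_le_sq]
  calc |max 0 (min 1 s) - max 0 (min 1 t)| ≤ |min 1 s - min 1 t| := by
        simpa [max_comm] using abs_max_sub_max_le_abs (min 1 s) (min 1 t) 0
    _ ≤ |s - t| := by
        have := abs_min_sub_min_le_max 1 s 1 t
        simpa using this

/-- The linear map sending barycentric weights to the combination of three points. -/
def comb (p q r : Pt) : ℝ × ℝ × ℝ →ₗ[ℝ] Pt where
  toFun w := w.1 • p + w.2.1 • q + w.2.2 • r
  map_add' x y := by simp only [Prod.fst_add, Prod.snd_add]; module
  map_smul' s x := by
    simp only [Prod.smul_fst, Prod.smul_snd, smul_eq_mul, RingHom.id_apply]; module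

lemma comb_apply (p q r : Pt) (w : ℝ × ℝ × ℝ) :
    comb p q r w = w.1 • p + w.2.1 • q + w.2.2 • r := rfl

/-- The simplex of barycentric weights. -/
def Wt : Set (ℝ × ℝ × ℝ) := {w | 0 ≤ w.1 ∧ 0 ≤ w.2.1 ∧ 0 ≤ w.2.2 ∧ w.1 + w.2.1 + w.2.2 = 1}

lemma Wt_convex : Convex ℝ Wt := by
  rintro x ⟨x1, x2, x3, xs⟩ y ⟨y1, y2, y3, ys⟩ a b ha hb hs
  refine ⟨?_, ?_, ?_, ?_⟩ <;>
    simp only [Prod.fst_add, Prod.snd_add, Prod.smul_fst, Prod.smul_snd, smul_eq_mul]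
  · positivity
  · positivity
  · positivity
  · linear_combination a * xs + b * ys + hs

/-- The interpolation `(f p + α f q + β f r) / (1 + α + β)`, written with the increments
`u = f q - f p` and `v = f r - f p`, is Lipschitz in the parameters. -/
lemma quot_lip {u v α α' β β' : ℝ} (hα : 0 ≤ α) (hα' : 0 ≤ α') (hβ : 0 ≤ β) (hβ' : 0 ≤ β')
    (ha : α' ≤ 1) (hb : β' ≤ 1) :
    ((α * u + β * v) / (1 + α + β) - (α' * u + β' * v) / (1 + α' + β')) ^ 2 ≤
      4 * (u ^ 2 + v ^ 2 + (u - v) ^ 2) * ((α - α') ^ 2 + (β - β') ^ 2) := by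
  have h1 : (α * u + β * v) / (1 + α + β) - (α' * u + β' * v) / (1 + α' + β') =
      ((α - α') * (u + (u - v) * β') + (β - β') * (v + (v - u) * α')) /
        ((1 + α + β) * (1 + α' + β')) := by
    field_simp; ring
  have hD : 1 ≤ (1 + α + β) * (1 + α' + β') :=
    one_le_mul_of_one_le_of_one_le (by linarith) (by linarith)
  have hN : ((α - α') * (u + (u - v) * β') + (β - β') * (v + (v - u) * α')) ^ 2 ≤
      4 * (u ^ 2 + v ^ 2 + (u - v) ^ 2) * ((α - α') ^ 2 + (β - β') ^ 2) := by
    have e1 : (u + (u - v) * β') ^ 2 ≤ 2 * (u ^ 2 + v ^ 2 + (u - v) ^ 2) := by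
      have : ((u - v) * β') ^ 2 ≤ (u - v) ^ 2 := by
        rw [mul_pow]; exact mul_le_of_le_one_right (sq_nonneg _) (by nlinarith)
      nlinarith [sq_nonneg (u - (u - v) * β'), sq_nonneg v]
    have e2 : (v + (v - u) * α') ^ 2 ≤ 2 * (u ^ 2 + v ^ 2 + (u - v) ^ 2) := by
      have : ((v - u) * α') ^ 2 ≤ (v - u) ^ 2 := by
        rw [mul_pow]; exact mul_le_of_le_one_right (sq_nonneg _) (by nlinarith)
      nlinarith [sq_nonneg (v - (v - u) * α'), sq_nonneg u]
    calc _ ≤ 2 * ((α - α') ^ 2 * (u + (u - v) * β') ^ 2 +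
          (β - β') ^ 2 * (v + (v - u) * α') ^ 2) := by
          nlinarith [sq_nonneg ((α - α') * (u + (u - v) * β') - (β - β') * (v + (v - u) * α'))]
      _ ≤ 2 * ((α - α') ^ 2 * (2 * (u ^ 2 + v ^ 2 + (u - v) ^ 2)) +
          (β - β') ^ 2 * (2 * (u ^ 2 + v ^ 2 + (u - v) ^ 2))) := by gcongr
      _ = _ := by ring
  rw [h1, div_pow]
  refine le_trans (div_le_self (sq_nonneg _) ?_) hN
  nlinarith

/-- The refined potential: on the child `(p, m, b)` of a coarse triangle, the coarse potential `f`
is interpolated between the vertices by means of folded copies of the fine potential `h`. -/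
lemma exists_refined (m : ℕ) {f h : Pt → ℝ} (hf : TestT f) (hh : TestT h) :
    ∃ F : Pt → ℝ, TestT F ∧ ∀ p q r, OT (m + 1) p q r → ∀ x ∈ Wt, ∀ y ∈ Wt,
      (F (comb p (mpt p q) (bary p q r) x) - F (comb p (mpt p q) (bary p q r) y)) ^ 2 ≤
        8 * ((f p - f q) ^ 2 + (f q - f r) ^ 2 + (f p - f r) ^ 2) *
        ((h (comb (hexCorner 2) (hexCorner 1) 0 x) - h (comb (hexCorner 2) (hexCorner 1) 0 y)) ^ 2 +
        (h (comb (hexCorner 0) (hexCorner 1) 0 x) - h (comb (hexCorner 0) (hexCorner 1) 0 y)) ^ 2 +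
        (h (comb (hexCorner 2) (hexCorner 3) 0 x) - h (comb (hexCorner 2) (hexCorner 3) 0 y)) ^ 2 +
        (h (comb (hexCorner 0) (hexCorner 5) 0 x) -
          h (comb (hexCorner 0) (hexCorner 5) 0 y)) ^ 2) := by
  -- `α` and `β` are the weights of `f q` and `f r`, that of `f p` being `1`.  On the edge `a = 0` of
  -- the child `α = 1`, on the edge `b = 0` `α = β`, and on the edge `c = 0` `β = 0`; these are the
  -- symmetries needed to glue the children together.
  let α : ℝ × ℝ × ℝ → ℝ := fun w => cl (1 + h (comb (hexCorner 2) (hexCorner 1) 0 w) -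
    h (comb (hexCorner 0) (hexCorner 1) 0 w))
  let β : ℝ × ℝ × ℝ → ℝ := fun w => cl (1 + h (comb (hexCorner 2) (hexCorner 3) 0 w) -
    h (comb (hexCorner 0) (hexCorner 5) 0 w))
  let V : Pt → Pt → Pt → ℝ → ℝ → ℝ → ℝ := fun p q r a b c =>
    f p + (α (a, b, c) * (f q - f p) + β (a, b, c) * (f r - f p)) / (1 + α (a, b, c) + β (a, b, c))
  have α0 : ∀ w, 0 ≤ α w := fun w => cl_nonneg _
  have β0 : ∀ w, 0 ≤ β w := fun w => cl_nonneg _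
  have hα : ∀ b c, α (0, b, c) = 1 := by
    intro b c; simp only [α, comb_apply, zero_smul, zero_add, add_sub_cancel_right, cl_one]
  have hαβ : ∀ a c, α (a, 0, c) = β (a, 0, c) := by
    intro a c; simp only [α, β, comb_apply, zero_smul]
  have hβ : ∀ a b, 0 ≤ a → 0 ≤ b → a + b = 1 → β (a, b, 0) = 0 := by
    intro a b ha hb hs
    have h2 : h (comb (hexCorner 2) (hexCorner 3) 0 (a, b, 0)) = 0 :=
      hh.1 _ ⟨a, b, ha, hb, hs, by simp [comb_apply]⟩
    have h5 : h (comb (hexCorner 0) (hexCorner 5) 0 (a, b, 0)) = 1 :=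
      hh.2 _ ⟨b, a, hb, ha, by linarith, by simp [comb_apply, hexCorner_six, add_comm]⟩
    simp only [β, h2, h5]; simp [cl_zero]
  obtain ⟨F, hF⟩ := exists_extension m V
    (by
      intro p q r b c _ _ _ _
      have := β0 (0, b, c)
      simp only [V, hα]; field_simp; ring)
    (by intro p q r a c _ _ _ _; simp only [V, hαβ]; ring)
    (by intro p q r r' a b _ _ ha hb hs; simp only [V, hβ a b ha hb hs]; ring)
    (by
      intro p q r q' r' _ _
      simp only [V, hαβ, hβ 1 0 (by norm_num) (by norm_num) (by norm_num)]; ring)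
  have side : ∀ (i : Fin 6) (c : ℝ), (∀ p ∈ hexSide i, f p = c) → ∀ p ∈ hexSide i, F p = c := by
    intro i c hc x hx
    obtain ⟨p, q, r, a, b, ho, hp, hq, ha, hb, hs, rfl⟩ := side_cover_half m i x hx
    rw [hF p q r a b 0 ho ha hb le_rfl (by linarith)]
    simp only [V, hβ a b ha hb hs, hc p hp, hc q hq]
    simp
  refine ⟨F, ⟨side 2 0 hf.1, side 5 1 hf.2⟩, ?_⟩
  rintro p q r ho ⟨a, b, c⟩ ⟨ha, hb, hc, hs⟩ ⟨a', b', c'⟩ ⟨ha', hb', hc', hs'⟩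
  simp only at ha hb hc hs ha' hb' hc' hs'
  have e1 : F (comb p (mpt p q) (bary p q r) (a, b, c)) = V p q r a b c :=
    hF p q r a b c ho ha hb hc hs
  have e2 : F (comb p (mpt p q) (bary p q r) (a', b', c')) = V p q r a' b' c' :=
    hF p q r a' b' c' ho ha' hb' hc' hs'
  rw [e1, e2]
  simp only [V, add_sub_add_left_eq_sub]
  refine (quot_lip (α0 _) (α0 _) (β0 _) (β0 _) (cl_le_one _) (cl_le_one _)).trans ?_
  have k1 := cl_lip (1 + h (comb (hexCorner 2) (hexCorner 1) 0 (a, b, c)) -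
    h (comb (hexCorner 0) (hexCorner 1) 0 (a, b, c)))
    (1 + h (comb (hexCorner 2) (hexCorner 1) 0 (a', b', c')) -
    h (comb (hexCorner 0) (hexCorner 1) 0 (a', b', c')))
  have k2 := cl_lip (1 + h (comb (hexCorner 2) (hexCorner 3) 0 (a, b, c)) -
    h (comb (hexCorner 0) (hexCorner 5) 0 (a, b, c)))
    (1 + h (comb (hexCorner 2) (hexCorner 3) 0 (a', b', c')) -
    h (comb (hexCorner 0) (hexCorner 5) 0 (a', b', c')))
  have k3 : ∀ x y z w : ℝ, (1 + x - y - (1 + z - w)) ^ 2 ≤ 2 * ((x - z) ^ 2 + (y - w) ^ 2) := by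
    intro x y z w; nlinarith [sq_nonneg ((x - z) + (y - w))]
  have hq : 4 * ((f q - f p) ^ 2 + (f r - f p) ^ 2 + (f q - f p - (f r - f p)) ^ 2) =
      4 * ((f p - f q) ^ 2 + (f q - f r) ^ 2 + (f p - f r) ^ 2) := by ring
  rw [hq]
  refine (mul_le_mul_of_nonneg_left (add_le_add (k1.trans (k3 _ _ _ _)) (k2.trans (k3 _ _ _ _)))
    (by positivity)).trans (le_of_eq ?_)
  ring

lemma sym6_nonneg {E : Type} {K : E → E → E → ℝ} (h : ∀ x y z, 0 ≤ K x y z) (p q r : E) :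
    0 ≤ sym6 K p q r := by
  have := h p q r; have := h q p r; have := h p r q; have := h q r p
  have := h r p q; have := h r q p
  simp only [sym6]; positivity

lemma sum_OF_q (n : ℕ) (f : Pt → ℝ) : ∑ x ∈ OF n, ((f x.1 - f x.2.1) ^ 2 +
    (f x.2.1 - f x.2.2) ^ 2 + (f x.1 - f x.2.2) ^ 2) = 3 * DT n f := by
  have h2 : ∑ x ∈ OF n, (f x.1 - f x.2.2) ^ 2 = DT n f :=
    sum_OF_swap23 n fun p q _ => (f p - f q) ^ 2
  have h3 : ∑ x ∈ OF n, (f x.2.1 - f x.2.2) ^ 2 = DT n f := by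
    rw [← h2]; exact sum_OF_swap12 n fun p _ r => (f p - f r) ^ 2
  rw [Finset.sum_add_distrib, Finset.sum_add_distrib, h2, h3, DT]; ring

/-- Submultiplicativity of the energies of admissible potentials. -/
lemma submult (m k : ℕ) {f h : Pt → ℝ} (hf : TestT f) (hh : TestT h) :
    ∃ F, TestT F ∧ DT (m + 1 + (k + 1)) F ≤ 24 * DT (m + 1) f * DT (k + 1) h := by
  obtain ⟨F, hF, hb⟩ := exists_refined m hf hh
  refine ⟨F, hF, ?_⟩
  let KF : Pt → Pt → Pt → ℝ := fun x y _ => (F x - F y) ^ 2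
  let Kh : Pt → Pt → Pt → ℝ := fun x y _ => (h x - h y) ^ 2
  -- the folded copies of the fine energy, on the simplex of weights
  let KA : Pt → Pt → ℝ × ℝ × ℝ → ℝ × ℝ × ℝ → ℝ × ℝ × ℝ → ℝ := fun u v x y z =>
    Kh (comb u v 0 x) (comb u v 0 y) (comb u v 0 z)
  have hcell : ∀ p q r, OT (m + 1) p q r →
      sym6 (Ch^[k] KF) p (mpt p q) (bary p q r) ≤
        8 * ((f p - f q) ^ 2 + (f q - f r) ^ 2 + (f p - f r) ^ 2) * DT (k + 1) h := by
    intro p q r ho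
    set C := 8 * ((f p - f q) ^ 2 + (f q - f r) ^ 2 + (f p - f r) ^ 2) with hC
    have C0 : 0 ≤ C := by positivity
    have key : ∀ x ∈ Wt, ∀ y ∈ Wt, ∀ z ∈ Wt,
        Ch^[k] KF (comb p (mpt p q) (bary p q r) x) (comb p (mpt p q) (bary p q r) y)
          (comb p (mpt p q) (bary p q r) z) ≤
        C * (Ch^[k] Kh (comb (hexCorner 2) (hexCorner 1) 0 x) (comb (hexCorner 2) (hexCorner 1) 0 y)
            (comb (hexCorner 2) (hexCorner 1) 0 z) +
          Ch^[k] Kh (comb (hexCorner 0) (hexCorner 1) 0 x) (comb (hexCorner 0) (hexCorner 1) 0 y)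
            (comb (hexCorner 0) (hexCorner 1) 0 z) +
          Ch^[k] Kh (comb (hexCorner 2) (hexCorner 3) 0 x) (comb (hexCorner 2) (hexCorner 3) 0 y)
            (comb (hexCorner 2) (hexCorner 3) 0 z) +
          Ch^[k] Kh (comb (hexCorner 0) (hexCorner 5) 0 x) (comb (hexCorner 0) (hexCorner 5) 0 y)
            (comb (hexCorner 0) (hexCorner 5) 0 z)) := by
      intro x hx y hy z hz
      have := Ch_iter_mono k Wt_convex (K := fun x y z => KF (comb p (mpt p q) (bary p q r) x)
        (comb p (mpt p q) (bary p q r) y) (comb p (mpt p q) (bary p q r) z))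
        (K' := C • (KA (hexCorner 2) (hexCorner 1) + KA (hexCorner 0) (hexCorner 1) +
          KA (hexCorner 2) (hexCorner 3) + KA (hexCorner 0) (hexCorner 5)))
        (fun x hx y hy z _ => by
          simpa only [Pi.smul_apply, Pi.add_apply, smul_eq_mul] using hb p q r ho x hx y hy)
        x hx y hy z hz
      simp only [Ch_iter_smul, Ch_iter_add] at this
      simp only [KA, Ch_iter_map, Pi.smul_apply, Pi.add_apply, smul_eq_mul] at this
      exact this
    have w0 : ((1, 0, 0) : ℝ × ℝ × ℝ) ∈ Wt := by simp [Wt]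
    have w1 : ((0, 1, 0) : ℝ × ℝ × ℝ) ∈ Wt := by simp [Wt]
    have w2 : ((0, 0, 1) : ℝ × ℝ × ℝ) ∈ Wt := by simp [Wt]
    have v0 : ∀ x y z, comb x y z (1, 0, 0) = x := by intros; simp [comb_apply]
    have v1 : ∀ x y z, comb x y z (0, 1, 0) = y := by intros; simp [comb_apply]
    have v2 : ∀ x y z, comb x y z (0, 0, 1) = z := by intros; simp [comb_apply]
    have a1 := key _ w0 _ w1 _ w2
    have a2 := key _ w1 _ w0 _ w2
    have a3 := key _ w0 _ w2 _ w1
    have a4 := key _ w1 _ w2 _ w0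
    have a5 := key _ w2 _ w0 _ w1
    have a6 := key _ w2 _ w1 _ w0
    simp only [v0, v1, v2] at a1 a2 a3 a4 a5 a6
    have hn : ∀ x y z, 0 ≤ Ch^[k] Kh x y z := Ch_iter_nonneg k fun _ _ _ => sq_nonneg _
    have hD : DT (k + 1) h = ∑ x ∈ OF 1, (Ch^[k] Kh) x.1 x.2.1 x.2.2 := by
      rw [← sum_OF_iter 0 k Kh]
      simp only [DT, Kh]; rw [show k + 1 = 0 + 1 + k by ring]
    rw [sum_OF_one', hexCorner_six] at hD
    have s3 := sym6_nonneg hn (hexCorner 3) (hexCorner 4) 0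
    have s4 := sym6_nonneg hn (hexCorner 4) (hexCorner 5) 0
    have hle : sym6 (Ch^[k] KF) p (mpt p q) (bary p q r) ≤ C *
        (sym6 (Ch^[k] Kh) (hexCorner 0) (hexCorner 1) 0 +
        sym6 (Ch^[k] Kh) (hexCorner 1) (hexCorner 2) 0 +
        sym6 (Ch^[k] Kh) (hexCorner 2) (hexCorner 3) 0 +
        sym6 (Ch^[k] Kh) (hexCorner 5) (hexCorner 0) 0) := by
      simp only [sym6]
      linarith
    refine hle.trans (mul_le_mul_of_nonneg_left ?_ C0)
    rw [hD]; linarith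
  have h1 : DT (m + 1 + (k + 1)) F =
      ∑ x ∈ OF (m + 1), sym6 (Ch^[k] KF) x.1 (mpt x.1 x.2.1) (bary x.1 x.2.1 x.2.2) := by
    rw [← sum_OF_succ m (Ch^[k] KF), ← sum_OF_iter (m + 1) k KF]
    simp only [DT, KF]; rw [show m + 1 + (k + 1) = m + 1 + 1 + k by ring]
  rw [h1]
  calc _ ≤ ∑ x ∈ OF (m + 1), 8 * ((f x.1 - f x.2.1) ^ 2 +
      (f x.2.1 - f x.2.2) ^ 2 + (f x.1 - f x.2.2) ^ 2) * DT (k + 1) h := by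
        refine Finset.sum_le_sum ?_
        rintro ⟨p, q, r⟩ hx
        exact hcell p q r (mem_OF.1 hx)
    _ = _ := by
        rw [← Finset.sum_mul, ← Finset.mul_sum, sum_OF_q]; ring

end Submult

/-! ### Discrete Stokes formula and weak duality -/

section Stokes
open scoped Classical

/-- The orientation of an ordered triangle. -/
def eps (p q r : Pt) : ℝ := Real.sign (det3 p q r)

lemma eps_swap12 (p q r : Pt) : eps q p r = - eps p q r := by
  rw [eps, det3_swap12, Real.sign_neg, eps]
lemma eps_swap23 (p q r : Pt) : eps p r q = - eps p q r := by
  rw [eps, det3_swap23, Real.sign_neg, eps]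
lemma eps_rot (p q r : Pt) : eps q r p = eps p q r := by rw [eps, det3_rot, eps]
lemma eps_child (p q r : Pt) : eps p (mpt p q) (bary p q r) = eps p q r := by
  rw [eps, det3_child, eps]
  rcases lt_trichotomy (det3 p q r) 0 with h | h | h
  · rw [Real.sign_of_neg h, Real.sign_of_neg (by linarith)]
  · rw [h]; simp
  · rw [Real.sign_of_pos h, Real.sign_of_pos (by linarith)]
lemma OT.eps_sq {n p q r} (h : OT (n + 1) p q r) : eps p q r * eps p q r = 1 := by
  rcases lt_or_gt_of_ne h.det_ne with h | h
  · rw [eps, Real.sign_of_neg h]; norm_num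
  · rw [eps, Real.sign_of_pos h]; norm_num

lemma sym6_eps {G : Pt → Pt → ℝ} (hG : ∀ p q, G q p = - G p q) (p q r : Pt) :
    sym6 (fun p q r => eps p q r * G p q) p q r =
      2 * eps p q r * (G p q + G q r + G r p) := by
  simp only [sym6]
  rw [eps_swap12 p q r, eps_swap23 p q r, eps_rot p q r, hG p q, hG r p, eps_rot r p q,
    eps_swap12 q r p, eps_rot p q r, hG q r, ← eps_rot r p q]
  ring

/-- Subdivision of a function of oriented edges. -/
def subd (G : Pt → Pt → ℝ) (p q : Pt) : ℝ := G p (mpt p q) + G (mpt p q) q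

lemma subd_anti {G : Pt → Pt → ℝ} (hG : ∀ p q, G q p = - G p q) (p q : Pt) :
    subd G q p = - subd G p q := by
  simp only [subd, mpt_comm q p]
  rw [hG (mpt p q) q, hG p (mpt p q)]; ring

lemma subd_iter_const {S : Set Pt} (hS : Convex ℝ S) {G : Pt → Pt → ℝ} {F : Pt → ℝ}
    (h : ∀ p ∈ S, ∀ q ∈ S, G p q = F q - F p) (n : ℕ) :
    ∀ p ∈ S, ∀ q ∈ S, subd^[n] G p q = F q - F p := by
  induction n generalizing G with
  | zero => exact h
  | succ n ih =>
    simp only [Function.iterate_succ_apply]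
    apply ih
    intro p hp q hq
    have hm : mpt p q ∈ S := by
      rw [mpt, smul_add]; exact hS hp hq (by norm_num) (by norm_num) (by norm_num)
    rw [subd, h _ hp _ hm, h _ hm _ hq]; ring

/-- Discrete Stokes formula: the oriented sum over all triangles of the circulation of `G` is its
circulation along the boundary of the hexagon. -/
lemma stokes (n : ℕ) {G : Pt → Pt → ℝ} (hG : ∀ p q, G q p = - G p q) :
    ∑ x ∈ OF (n + 1), eps x.1 x.2.1 x.2.2 * G x.1 x.2.1 =
      2 * (subd^[n] G (hexCorner 0) (hexCorner 1) + subd^[n] G (hexCorner 1) (hexCorner 2) +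
        subd^[n] G (hexCorner 2) (hexCorner 3) + subd^[n] G (hexCorner 3) (hexCorner 4) +
        subd^[n] G (hexCorner 4) (hexCorner 5) + subd^[n] G (hexCorner 5) (hexCorner 6)) := by
  induction n generalizing G with
  | zero =>
    rw [sum_OF_one' (fun p q r => eps p q r * G p q)]
    simp only [sym6_eps hG, hexCorner_six, Function.iterate_zero, id]
    have e : ∀ p q : Pt, det3 p q 0 = 1 → eps p q 0 = 1 := fun p q h => by
      rw [eps, h]; exact Real.sign_of_pos one_pos
    rw [e _ _ (by simp [det3]), e _ _ (by simp [det3]), e _ _ (by simp [det3]),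
      e _ _ (by simp [det3]), e _ _ (by simp [det3]), e _ _ (by simp [det3])]
    rw [hG _ 0, hG _ 0, hG _ 0, hG _ 0, hG _ 0, hG _ 0]
    ring
  | succ n ih =>
    rw [Function.iterate_succ_apply, ← ih (subd_anti hG),
      sum_OF_succ n (fun p q r => eps p q r * G p q)]
    simp only [sym6_eps hG, eps_child]
    -- the edges interior to a coarse triangle cancel
    have c1 : ∑ x ∈ OF (n + 1), eps x.1 x.2.1 x.2.2 * G (mpt x.1 x.2.1) (bary x.1 x.2.1 x.2.2) =
        0 := by
      have h1 := sum_OF_swap12 (n + 1) fun p q r => eps p q r * G (mpt p q) (bary p q r)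
      have h2 : ∑ x ∈ OF (n + 1), eps x.2.1 x.1 x.2.2 *
          G (mpt x.2.1 x.1) (bary x.2.1 x.1 x.2.2) =
          ∑ x ∈ OF (n + 1), -(eps x.1 x.2.1 x.2.2 * G (mpt x.1 x.2.1) (bary x.1 x.2.1 x.2.2)) :=
        Finset.sum_congr rfl fun x _ => by
          rw [mpt_comm, bary_swap12, eps_swap12, neg_mul]
      rw [Finset.sum_neg_distrib] at h2
      linarith
    have c2 : ∑ x ∈ OF (n + 1), eps x.1 x.2.1 x.2.2 * G (bary x.1 x.2.1 x.2.2) x.1 = 0 := by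
      have h1 := sum_OF_swap23 (n + 1) fun p q r => eps p q r * G (bary p q r) p
      have h2 : ∑ x ∈ OF (n + 1), eps x.1 x.2.2 x.2.1 * G (bary x.1 x.2.2 x.2.1) x.1 =
          ∑ x ∈ OF (n + 1), -(eps x.1 x.2.1 x.2.2 * G (bary x.1 x.2.1 x.2.2) x.1) :=
        Finset.sum_congr rfl fun x _ => by
          rw [bary_swap23, eps_swap23, neg_mul]
      rw [Finset.sum_neg_distrib] at h2
      linarith
    have c3 : ∑ x ∈ OF (n + 1), eps x.1 x.2.1 x.2.2 * G (mpt x.1 x.2.1) x.2.1 =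
        ∑ x ∈ OF (n + 1), eps x.1 x.2.1 x.2.2 * G x.1 (mpt x.1 x.2.1) := by
      rw [← sum_OF_swap12 (n + 1) fun p q r => eps p q r * G p (mpt p q)]
      refine Finset.sum_congr rfl fun x _ => ?_
      rw [eps_swap12, mpt_comm x.2.1, hG (mpt x.1 x.2.1) x.2.1]; ring
    simp only [subd, mul_add, Finset.sum_add_distrib, c3]
    simp only [mul_assoc, ← Finset.mul_sum, c1, c2]
    ring

/-- Admissible potentials for the hexacarpet, on sets of points. -/
def TestH (g : Set Pt → ℝ) : Prop :=
  (∀ v : Set Pt, v.Nonempty → v ⊆ hexSide 0 ∨ v ⊆ hexSide 1 → g v = 0) ∧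
    ∀ v : Set Pt, v.Nonempty → v ⊆ hexSide 3 ∨ v ⊆ hexSide 4 → g v = 1

lemma hexSide_convex (i : ℕ) : Convex ℝ (hexSide i) := convex_segment _ _

/-- The pairing of the gradients of a potential on the vertices and of a potential on the
hexacarpet only depends on the boundary values. -/
lemma pairing (n : ℕ) {F : Pt → ℝ} {g : Set Pt → ℝ} {s t : ℝ} (hs : ∀ p ∈ hexSide 2, F p = s)
    (ht : ∀ p ∈ hexSide 5, F p = t) (hg : TestH g) :
    ∑ x ∈ OF (n + 1), eps x.1 x.2.1 x.2.2 * (F x.2.1 - F x.1) *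
      (g {x.1, x.2.1} - g {x.1, x.2.1, x.2.2}) = 2 * (t - s) := by
  have hcanc : ∑ x ∈ OF (n + 1), eps x.1 x.2.1 x.2.2 * (F x.2.1 - F x.1) *
      g {x.1, x.2.1, x.2.2} = 0 := by
    have h2 := sum_OF_swap23 (n + 1) fun p q r => eps p q r * F p * g {p, q, r}
    have h3 := sum_OF_swap12 (n + 1) fun p q r => eps p q r * F p * g {p, q, r}
    have e2 : ∑ x ∈ OF (n + 1), eps x.1 x.2.2 x.2.1 * F x.1 * g {x.1, x.2.2, x.2.1} =
        ∑ x ∈ OF (n + 1), -(eps x.1 x.2.1 x.2.2 * F x.1 * g {x.1, x.2.1, x.2.2}) :=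
      Finset.sum_congr rfl fun x _ => by
        rw [Set.pair_comm, eps_swap23]; ring
    have e3 : ∑ x ∈ OF (n + 1), eps x.2.1 x.1 x.2.2 * F x.2.1 * g {x.2.1, x.1, x.2.2} =
        ∑ x ∈ OF (n + 1), -(eps x.1 x.2.1 x.2.2 * F x.2.1 * g {x.1, x.2.1, x.2.2}) :=
      Finset.sum_congr rfl fun x _ => by
        rw [Set.insert_comm, eps_swap12]; ring
    rw [Finset.sum_neg_distrib] at e2 e3
    simp only [mul_sub, sub_mul, Finset.sum_sub_distrib] at h2 h3 ⊢
    linarith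
  let G : Pt → Pt → ℝ := fun p q => (F q - F p) * g {p, q}
  have hG : ∀ p q, G q p = - G p q := by
    intro p q; simp only [G, Set.pair_comm q p]; ring
  have hst := stokes n hG
  have hmain : ∑ x ∈ OF (n + 1), eps x.1 x.2.1 x.2.2 * (F x.2.1 - F x.1) *
      (g {x.1, x.2.1} - g {x.1, x.2.1, x.2.2}) =
      ∑ x ∈ OF (n + 1), eps x.1 x.2.1 x.2.2 * G x.1 x.2.1 := by
    simp only [mul_sub _ (g _) (g _), Finset.sum_sub_distrib]
    rw [hcanc, sub_zero]
    exact Finset.sum_congr rfl fun x _ => by simp only [G]; ring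
  rw [hmain, hst]
  have pair_sub : ∀ {S : Set Pt} {p q}, p ∈ S → q ∈ S → ({p, q} : Set Pt) ⊆ S := by
    rintro S p q hp hq x (rfl | rfl) <;> assumption
  have L : ∀ i, hexCorner i ∈ hexSide i := fun i => left_mem_segment _ _ _
  have R : ∀ i, hexCorner (i + 1) ∈ hexSide i := fun i => right_mem_segment _ _ _
  have b0 := subd_iter_const (G := G) (hexSide_convex 0) (F := fun _ => 0) (fun p hp q hq => by
    simp [G, hg.1 {p, q} ⟨p, by simp⟩ (.inl (pair_sub hp hq))]) n _ (L 0) _ (R 0)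
  have b1 := subd_iter_const (G := G) (hexSide_convex 1) (F := fun _ => 0) (fun p hp q hq => by
    simp [G, hg.1 {p, q} ⟨p, by simp⟩ (.inr (pair_sub hp hq))]) n _ (L 1) _ (R 1)
  have b2 := subd_iter_const (G := G) (hexSide_convex 2) (F := fun _ => 0) (fun p hp q hq => by
    simp [G, hs p hp, hs q hq]) n _ (L 2) _ (R 2)
  have b3 := subd_iter_const (G := G) (hexSide_convex 3) (F := F) (fun p hp q hq => by
    simp [G, hg.2 {p, q} ⟨p, by simp⟩ (.inl (pair_sub hp hq))]) n _ (L 3) _ (R 3)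
  have b4 := subd_iter_const (G := G) (hexSide_convex 4) (F := F) (fun p hp q hq => by
    simp [G, hg.2 {p, q} ⟨p, by simp⟩ (.inr (pair_sub hp hq))]) n _ (L 4) _ (R 4)
  have b5 := subd_iter_const (G := G) (hexSide_convex 5) (F := fun _ => 0) (fun p hp q hq => by
    simp [G, ht p hp, ht q hq]) n _ (L 5) _ (R 5)
  simp only [zero_add, Nat.reduceAdd] at b0 b1 b2 b3 b4 b5
  rw [b0, b1, b2, b3, b4, b5, ← hs _ (R 2), ← ht _ (L 5)]
  ring

/-- The easy half of the duality, from the Cauchy–Schwarz inequality. -/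
lemma four_le (n : ℕ) {f : Pt → ℝ} {g : Set Pt → ℝ} (hf : TestT f) (hg : TestH g) :
    4 ≤ DT (n + 1) f * DH (n + 1) g := by
  have h := pairing n hf.1 hf.2 hg
  have cs := Finset.sum_mul_sq_le_sq_mul_sq (OF (n + 1))
    (fun x => eps x.1 x.2.1 x.2.2 * (f x.2.1 - f x.1))
    (fun x => g {x.1, x.2.1} - g {x.1, x.2.1, x.2.2})
  rw [h] at cs
  have e : ∑ x ∈ OF (n + 1), (eps x.1 x.2.1 x.2.2 * (f x.2.1 - f x.1)) ^ 2 = DT (n + 1) f := by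
    refine Finset.sum_congr rfl ?_
    rintro ⟨p, q, r⟩ hx
    have := (mem_OF.1 hx).eps_sq
    simp only
    linear_combination (f q - f p) ^ 2 * this
  rw [e] at cs
  simp only [DH]
  linarith

end Stokes

/-! ### The sides of the hexagon -/

section Sides
open scoped Classical

/-- An induction principle for the vertices of triangles. -/
lemma OT.vertex_induction {P : Pt → Prop} (h0 : P 0) (hc : ∀ i : Fin 6, P (hexCorner i))
    (hm : ∀ p q, P p → P q → P (mpt p q)) (hb : ∀ p q r, P p → P q → P r → P (bary p q r))
    (n : ℕ) : ∀ p q r, OT (n + 1) p q r → P p ∧ P q ∧ P r := by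
  have key : ∀ m, (∀ p q r, (p, q, r) ∈ TriSet m → P p ∧ P q ∧ P r) →
      ∀ p q r, OT m p q r → P p ∧ P q ∧ P r := by
    intro m hm p q r h
    rcases h with h | h | h | h | h | h <;> have := hm _ _ _ h <;> tauto
  induction n with
  | zero =>
    refine key _ fun p q r h => ?_
    rcases mem_TriSet_one.1 h with h | h | h | h | h | h <;>
      (simp only [Prod.mk.injEq] at h; obtain ⟨rfl, rfl, rfl⟩ := h)
    exacts [⟨hc 0, hc 1, h0⟩, ⟨hc 1, hc 2, h0⟩, ⟨hc 2, hc 3, h0⟩, ⟨hc 3, hc 4, h0⟩,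
      ⟨hc 4, hc 5, h0⟩, ⟨hc 5, hc 0, h0⟩]
  | succ n ih =>
    refine key _ fun p q r h => ?_
    obtain ⟨a, b, c, ho, e⟩ := mem_TriSet_succ.1 h
    simp only [Prod.mk.injEq] at e; obtain ⟨rfl, rfl, rfl⟩ := e
    obtain ⟨ha, hb', hc'⟩ := ih _ _ _ ho
    exact ⟨ha, hm _ _ ha hb', hb _ _ _ ha hb' hc'⟩

/-- First coefficient of the linear form that equals `1` on the `i`-th side. -/
def sa (i : Fin 6) : ℝ := ![1, 0, -1, -1, 0, 1] i
/-- Second coefficient of the linear form that equals `1` on the `i`-th side. -/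
def sb (i : Fin 6) : ℝ := ![1, 1, 0, -1, -1, 0] i

/-- The linear form that is at most `1` on the hexagon, with equality on the `i`-th side. -/
def sl (i : Fin 6) (p : Pt) : ℝ := sa i * cx p + sb i * cy p

/-- The closed hexagon. -/
def Hexa (p : Pt) : Prop := ∀ i, sl i p ≤ 1

lemma sl_mpt (i : Fin 6) (p q : Pt) : sl i (mpt p q) = (sl i p + sl i q) / 2 := by
  simp [sl, mpt]; ring

lemma sl_bary (i : Fin 6) (p q r : Pt) : sl i (bary p q r) = (sl i p + sl i q + sl i r) / 3 := by
  simp [sl, bary]; ring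

lemma OT.hexa {n : ℕ} {p q r : Pt} (h : OT (n + 1) p q r) : Hexa p ∧ Hexa q ∧ Hexa r := by
  refine OT.vertex_induction (P := Hexa) ?_ ?_ ?_ ?_ n p q r h
  · intro i; simp [sl]
  · intro j i; fin_cases i <;> fin_cases j <;> simp [sl, sa, sb]
  · intro p q hp hq i
    have := hp i; have := hq i; rw [sl_mpt]; linarith
  · intro p q r hp hq hr i
    have := hp i; have := hq i; have := hr i; rw [sl_bary]; linarith

lemma mem_side_of {p c d : Pt} {t : ℝ} (h0 : 0 ≤ t) (h1 : t ≤ 1)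
    (hx : cx p = (1 - t) * cx c + t * cx d) (hy : cy p = (1 - t) * cy c + t * cy d) :
    p ∈ segment ℝ c d :=
  ⟨1 - t, t, by linarith, h0, by ring, pt_ext (by simp [hx]) (by simp [hy])⟩

lemma sl_of_mem {i : Fin 6} {p : Pt} (h : p ∈ hexSide i) : sl i p = 1 := by
  obtain ⟨a, b, -, -, hs, rfl⟩ := h
  fin_cases i <;> simp [sl, sa, sb] <;> linarith

lemma Hexa.mem_side {i : Fin 6} {p : Pt} (h : Hexa p) : p ∈ hexSide i ↔ sl i p = 1 := by
  refine ⟨sl_of_mem, fun e => ?_⟩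
  have e0 := h 0; have e1 := h 1; have e2 := h 2
  have e3 := h 3; have e4 := h 4; have e5 := h 5
  simp [sl, sa, sb] at e0 e1 e2 e3 e4 e5
  fin_cases i <;> simp [sl, sa, sb] at e <;> simp only [hexSide]
  · exact mem_side_of (t := cy p) (by linarith) (by linarith) (by simp; linarith) (by simp)
  · exact mem_side_of (t := -cx p) (by linarith) (by linarith) (by simp) (by simp; linarith)
  · exact mem_side_of (t := 1 - cy p) (by linarith) (by linarith) (by simp; linarith)
      (by simp)
  · exact mem_side_of (t := 1 + cx p) (by linarith) (by linarith) (by simp)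
      (by simp; linarith)
  · exact mem_side_of (t := cx p) (by linarith) (by linarith) (by simp) (by simp; linarith)
  · exact mem_side_of (t := 1 + cy p) (by linarith) (by linarith) (by simp; linarith)
      (by simp)

/-- The position of the third vertex of a triangle with an edge on a side. -/
lemma det3_side {i : Fin 6} {p q : Pt} (hp : sl i p = 1) (hq : sl i q = 1) (r : Pt) :
    (sa i ^ 2 + sb i ^ 2) * det3 p q r =
      (sa i * (cy q - cy p) - sb i * (cx q - cx p)) * (1 - sl i r) := by
  simp only [sl, det3] at *
  have hu : sa i * (cx q - cx p) + sb i * (cy q - cy p) = 0 := by linarith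
  linear_combination (sa i * (cy r - cy p) - sb i * (cx r - cx p)) * hu +
    (sa i * (cy q - cy p) - sb i * (cx q - cx p)) * hp

lemma sab_pos (i : Fin 6) : 0 < sa i ^ 2 + sb i ^ 2 := by
  fin_cases i <;> simp [sa, sb]

lemma OT.not_side {n : ℕ} {p q r : Pt} (h : OT (n + 1) p q r) {i : Fin 6} (hp : p ∈ hexSide i)
    (hq : q ∈ hexSide i) : r ∉ hexSide i := by
  intro hr
  have := det3_side (sl_of_mem hp) (sl_of_mem hq) r
  rw [sl_of_mem hr, sub_self, mul_zero] at this
  rcases mul_eq_zero.1 this with e | e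
  · exact (sab_pos i).ne' e
  · exact h.det_ne e

/-- An edge on a side is contained in only one triangle. -/
lemma OT.side_unique {n : ℕ} {p q r r' : Pt} (h : OT (n + 1) p q r) (h' : OT (n + 1) p q r')
    {i : Fin 6} (hp : p ∈ hexSide i) (hq : q ∈ hexSide i) : r = r' := by
  have e := det3_side (sl_of_mem hp) (sl_of_mem hq) r
  have e' := det3_side (sl_of_mem hp) (sl_of_mem hq) r'
  have l : sl i r < 1 := lt_of_le_of_ne (h.hexa.2.2 i) fun e =>
    h.not_side hp hq (h.hexa.2.2.mem_side.2 e)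
  have l' : sl i r' < 1 := lt_of_le_of_ne (h'.hexa.2.2 i) fun e =>
    h'.not_side hp hq (h'.hexa.2.2.mem_side.2 e)
  have hs := sab_pos i
  have hne : sa i * (cy q - cy p) - sb i * (cx q - cx p) ≠ 0 := by
    intro h0
    rw [h0, zero_mul] at e
    rcases mul_eq_zero.1 e with e | e
    · exact hs.ne' e
    · exact h.det_ne e
  refine h.eq_of_det h' ?_
  have : 0 < ((sa i ^ 2 + sb i ^ 2) * det3 p q r) * ((sa i ^ 2 + sb i ^ 2) * det3 p q r') := by
    rw [e, e']
    have : 0 < (sa i * (cy q - cy p) - sb i * (cx q - cx p)) ^ 2 * ((1 - sl i r) * (1 - sl i r')) :=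
      mul_pos (by positivity) (mul_pos (by linarith) (by linarith))
    linarith
  have h2 : 0 < (sa i ^ 2 + sb i ^ 2) ^ 2 * (det3 p q r * det3 p q r') := by linarith
  exact (pos_iff_pos_of_mul_pos h2).1 (by positivity)

lemma OT.mpt_side {n : ℕ} {p q r : Pt} (h : OT (n + 1) p q r) {i : Fin 6} :
    mpt p q ∈ hexSide i ↔ p ∈ hexSide i ∧ q ∈ hexSide i := by
  constructor
  · intro hm
    have e := sl_of_mem hm
    rw [sl_mpt] at e
    have := h.hexa.1 i; have := h.hexa.2.1 i
    exact ⟨h.hexa.1.mem_side.2 (by linarith), h.hexa.2.1.mem_side.2 (by linarith)⟩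
  · rintro ⟨hp, hq⟩
    rw [mpt, smul_add]
    exact hexSide_convex i hp hq (by norm_num) (by norm_num) (by norm_num)

lemma OT.bary_side {n : ℕ} {p q r : Pt} (h : OT (n + 1) p q r) {i : Fin 6} :
    bary p q r ∉ hexSide i := by
  intro hm
  have e := sl_of_mem hm
  rw [sl_bary] at e
  have := h.hexa.1 i; have := h.hexa.2.1 i; have := h.hexa.2.2 i
  exact h.not_side (h.hexa.1.mem_side.2 (by linarith)) (h.hexa.2.1.mem_side.2 (by linarith))
    (h.hexa.2.2.mem_side.2 (by linarith))

lemma hexCorner_succ (i : Fin 6) : hexCorner (i + 1) = hexCorner (i + 1 : Fin 6) := by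
  fin_cases i <;> simp

lemma OT.vertex_one {p q r : Pt} (h : OT 1 p q r) : (∃ i : Fin 6, p = hexCorner i) ∨ p = 0 := by
  rcases h with h | h | h | h | h | h <;> obtain ⟨i, e⟩ := h <;>
    simp only [Prod.mk.injEq] at e <;> obtain ⟨e1, e2, e3⟩ := e
  exacts [.inl ⟨_, e1⟩, .inl ⟨_, e2.trans (hexCorner_succ i)⟩, .inl ⟨_, e1⟩, .inr e3,
    .inl ⟨_, e2.trans (hexCorner_succ i)⟩, .inr e3]

/-- A vertex of `T_{n+2}` is a vertex, the midpoint of an edge or a barycenter of `T_{n+1}`. -/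
lemma OT.vertex_cases {n : ℕ} {x y z : Pt} (h : OT (n + 2) x y z) :
    ∃ p q r, OT (n + 1) p q r ∧ (x = p ∨ x = mpt p q ∨ x = bary p q r) := by
  rcases h with h | h | h | h | h | h <;> obtain ⟨p, q, r, ho, e⟩ := mem_TriSet_succ.1 h <;>
    simp only [Prod.mk.injEq] at e <;> exact ⟨p, q, r, ho, by tauto⟩

/-- A function on the vertices that does not vary along the edges on a side is constant on that
side. -/
lemma side_const (n : ℕ) (i : Fin 6) {F : Pt → ℝ}
    (hF : ∀ p q r, OT (n + 1) p q r → p ∈ hexSide i → q ∈ hexSide i → F q = F p) :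
    ∀ p q r, OT (n + 1) p q r → p ∈ hexSide i → F p = F (hexCorner i) := by
  induction n with
  | zero =>
    intro p q r h hp
    have ht : OT 1 (hexCorner i) (hexCorner (i + 1)) 0 := .inl ⟨i, rfl⟩
    have e1 := hF _ _ _ ht (left_mem_segment _ _ _) (right_mem_segment _ _ _)
    have e := sl_of_mem hp
    rcases h.vertex_one with ⟨j, rfl⟩ | rfl
    · have : hexCorner j = hexCorner i ∨ hexCorner j = hexCorner (i + 1) := by
        fin_cases i <;> fin_cases j <;> simp [sl, sa, sb] at e ⊢ <;> norm_num at e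
      rcases this with h | h <;> rw [h]
      exact e1
    · simp [sl] at e
  | succ n ih =>
    have ih' := ih fun p q r h hp hq => by
      have hm := h.mpt_side.2 ⟨hp, hq⟩
      have a1 := hF _ _ _ (.inl h.child) hp hm
      have h' := OT.of_mem h.swap12.child
      simp only [mpt_comm q p] at h'
      have a2 := hF _ _ _ h' hq hm
      rw [← a1, a2]
    intro x y z h hx
    obtain ⟨p, q, r, ho, rfl | rfl | rfl⟩ := h.vertex_cases
    · exact ih' _ _ _ ho hx
    · obtain ⟨hp, hq⟩ := ho.mpt_side.1 hx
      rw [← ih' _ _ _ ho hp]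
      exact hF _ _ _ (.inl ho.child) hp hx
    · exact absurd hx ho.bary_side

end Sides

/-! ### Discrete Poincaré lemma -/

section Poincare
open scoped Classical

/-- Poincaré lemma on the triangulated hexagon: a function of oriented edges without circulation
around the triangles is a gradient.  The proof is by induction on the subdivision: a primitive of
the coarse function is extended to midpoints and barycenters. -/
lemma poincare (n : ℕ) {ω : Pt → Pt → ℝ} (ha : ∀ p q r, OT (n + 1) p q r → ω q p = - ω p q)
    (hc : ∀ p q r, OT (n + 1) p q r → ω p q + ω q r + ω r p = 0) :
    ∃ F : Pt → ℝ, ∀ p q r, OT (n + 1) p q r → F q - F p = ω p q := by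
  induction n generalizing ω with
  | zero =>
    refine ⟨fun x => if x = 0 then 0 else ω 0 x, fun p q r h => ?_⟩
    have h0 : p = 0 ∨ q = 0 ∨ r = 0 := by
      rcases h with h | h | h | h | h | h <;> obtain ⟨i, e⟩ := h <;>
        simp only [Prod.mk.injEq] at e <;> obtain ⟨e1, e2, e3⟩ := e
      exacts [.inr (.inr e3), .inr (.inr e3), .inr (.inl e3), .inl e3, .inr (.inl e3), .inl e3]
    have c := hc _ _ _ h
    have a1 := ha _ _ _ h
    have a2 := ha _ _ _ h.rot
    have a3 := ha _ _ _ h.rot'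
    have n1 := h.ne12
    have n2 := h.ne13
    have n3 := h.ne23
    rcases h0 with rfl | rfl | rfl
    · simp [n1.symm]
    · simp only [n1, if_false, if_true]; linarith
    · simp only [n2, n3, if_false]; linarith
  | succ n ih =>
    -- circulations around the triangles `(p, m, β)` with `m = mpt p q`, `β = bary p q r`
    have k1 : ∀ p q r, OT (n + 1) p q r →
        ω p (mpt p q) = ω p (bary p q r) - ω (mpt p q) (bary p q r) := by
      intro p q r h
      have h' : OT (n + 2) p (mpt p q) (bary p q r) := .inl h.child
      linarith [hc _ _ _ h', ha _ _ _ h'.swap23]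
    have k2 : ∀ p q r, OT (n + 1) p q r →
        ω (mpt p q) q = ω (mpt p q) (bary p q r) - ω q (bary p q r) := by
      intro p q r h
      have h' := OT.of_mem h.swap12.child
      simp only [mpt_comm q p, bary_swap12 q p] at h'
      linarith [hc _ _ _ h', ha _ _ _ h', ha _ _ _ h'.swap23]
    have k3 : ∀ p q r, OT (n + 1) p q r → ω q (mpt p q) = - ω (mpt p q) q := by
      intro p q r h
      have h' := OT.of_mem h.swap12.child
      simp only [mpt_comm q p, bary_swap12 q p] at h'
      linarith [ha _ _ _ h']
    obtain ⟨F0, hF0⟩ := ih (ω := fun p q => ω p (mpt p q) + ω (mpt p q) q)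
      (fun p q r h => by
        have := k3 _ _ _ h
        have h4 := k3 _ _ _ h.swap12
        simp only [mpt_comm q p] at h4 ⊢
        linarith)
      (fun p q r h => by
        have a1 := k1 _ _ _ h; have a2 := k2 _ _ _ h
        have b1 := k1 _ _ _ h.rot; have b2 := k2 _ _ _ h.rot
        have c1 := k1 _ _ _ h.rot'; have c2 := k2 _ _ _ h.rot'
        simp only [bary_rot p q r, bary_rot' p q r] at b1 b2 c1 c2
        linarith)
    obtain ⟨F, hF⟩ := exists_extension n
      (fun p q r a b c => a * F0 p + b * (F0 p + ω p (mpt p q)) + c * (F0 p + ω p (bary p q r)))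
      (fun p q r b c h _ _ _ => by
        have h1 := hF0 _ _ _ h; have h3 := k3 _ _ _ h
        have a1 := k1 _ _ _ h; have a2 := k2 _ _ _ h
        simp only [mpt_comm q p, bary_swap12 q p]
        have e1 : F0 p + ω p (mpt p q) = F0 q + ω q (mpt p q) := by linarith
        have e2 : F0 p + ω p (bary p q r) = F0 q + ω q (bary p q r) := by linarith
        rw [e1, e2]; ring)
      (fun p q r a c h _ _ _ => by simp only [bary_swap23 p r q]; ring)
      (fun p q r r' a b h h' _ _ _ => by ring)
      (fun p q r q' r' h h' => by ring)
    have F1 : ∀ p q r, OT (n + 1) p q r → F p = F0 p := fun p q r h => by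
      simpa using hF p q r 1 0 0 h (by norm_num) (by norm_num) (by norm_num) (by norm_num)
    have F2 : ∀ p q r, OT (n + 1) p q r → F (mpt p q) = F0 p + ω p (mpt p q) := fun p q r h => by
      simpa using hF p q r 0 1 0 h (by norm_num) (by norm_num) (by norm_num) (by norm_num)
    have F3 : ∀ p q r, OT (n + 1) p q r → F (bary p q r) = F0 p + ω p (bary p q r) :=
      fun p q r h => by
      simpa using hF p q r 0 0 1 h (by norm_num) (by norm_num) (by norm_num) (by norm_num)
    refine ⟨F, fun x y z h => ?_⟩
    have key : ∀ x y z, (x, y, z) ∈ TriSet (n + 2) → F y - F x = ω x y ∧ F z - F y = ω y z ∧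
        F x - F z = ω z x := by
      intro x y z h
      obtain ⟨p, q, r, ho, e⟩ := mem_TriSet_succ.1 h
      simp only [Prod.mk.injEq] at e; obtain ⟨rfl, rfl, rfl⟩ := e
      have := F1 _ _ _ ho; have := F2 _ _ _ ho; have := F3 _ _ _ ho
      have := k1 _ _ _ ho; have := hc _ _ _ (.inl h)
      refine ⟨?_, ?_, ?_⟩ <;> linarith
    have hanti := ha _ _ _ h
    rcases h with h | h | h | h | h | h <;> have := key _ _ _ h <;> linarith

end Poincare

/-! ### Incidences and the harmonic potential -/

section Fibres
open scoped Classical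

lemma hexa_side {i : Fin 6} {p : Pt} (h : p ∈ hexSide i) : Hexa p := by
  obtain ⟨a, b, ha, hb, hs, rfl⟩ := h
  intro j
  fin_cases i <;> fin_cases j <;> simp [sl, sa, sb] <;> linarith

lemma mem_pair_pair {a b p q : Pt} (h : ({a, b} : Set Pt) = {p, q}) :
    (a = p ∧ b = q) ∨ (a = q ∧ b = p) := by
  have := Set.pair_eq_pair_iff.1 h
  tauto

lemma triple_ne_pair {a b p q r : Pt} (h1 : p ≠ q) (h2 : p ≠ r) (h3 : q ≠ r) :
    ({a, b} : Set Pt) ≠ {p, q, r} := by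
  intro h
  have hp : p ∈ ({a, b} : Set Pt) := by rw [h]; simp
  have hq : q ∈ ({a, b} : Set Pt) := by rw [h]; simp
  have hr : r ∈ ({a, b} : Set Pt) := by rw [h]; simp
  simp only [Set.mem_insert_iff, Set.mem_singleton_iff] at hp hq hr
  rcases hp with rfl | rfl <;> rcases hq with rfl | rfl <;> rcases hr with rfl | rfl <;> simp_all

lemma triple_eq {a b c p q r : Pt} (h1 : a ≠ b) (h2 : a ≠ c) (h3 : b ≠ c)
    (h : ({a, b, c} : Set Pt) = {p, q, r}) :
    (a = p ∧ b = q ∧ c = r) ∨ (a = q ∧ b = p ∧ c = r) ∨ (a = p ∧ b = r ∧ c = q) ∨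
    (a = q ∧ b = r ∧ c = p) ∨ (a = r ∧ b = p ∧ c = q) ∨ (a = r ∧ b = q ∧ c = p) := by
  have ha : a ∈ ({p, q, r} : Set Pt) := by rw [← h]; simp
  have hb : b ∈ ({p, q, r} : Set Pt) := by rw [← h]; simp
  have hc : c ∈ ({p, q, r} : Set Pt) := by rw [← h]; simp
  simp only [Set.mem_insert_iff, Set.mem_singleton_iff] at ha hb hc
  rcases ha with rfl | rfl | rfl <;> rcases hb with rfl | rfl | rfl <;>
    rcases hc with rfl | rfl | rfl <;> simp_all

/-- The ordered triangles with a given vertex set. -/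
lemma sum_OF_triangle {n : ℕ} {p q r : Pt} (h : OT (n + 1) p q r) (K : Pt → Pt → Pt → ℝ) :
    (∑ x ∈ OF (n + 1), if ({x.1, x.2.1, x.2.2} : Set Pt) = {p, q, r} then K x.1 x.2.1 x.2.2
      else 0) = sym6 K p q r := by
  have h1 := h.ne12
  have h2 := h.ne13
  have h3 := h.ne23
  rw [← Finset.sum_filter]
  have : (OF (n + 1)).filter (fun x => ({x.1, x.2.1, x.2.2} : Set Pt) = {p, q, r}) =
      {(p, q, r), (q, p, r), (p, r, q), (q, r, p), (r, p, q), (r, q, p)} := by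
    ext ⟨a, b, c⟩
    simp only [Finset.mem_filter, mem_OF, Finset.mem_insert, Finset.mem_singleton, Prod.mk.injEq]
    constructor
    · rintro ⟨ho, e⟩
      exact triple_eq ho.ne12 ho.ne13 ho.ne23 e
    · rintro (⟨rfl, rfl, rfl⟩ | ⟨rfl, rfl, rfl⟩ | ⟨rfl, rfl, rfl⟩ | ⟨rfl, rfl, rfl⟩ |
        ⟨rfl, rfl, rfl⟩ | ⟨rfl, rfl, rfl⟩)
      · exact ⟨h, rfl⟩
      · exact ⟨h.swap12, by ext; simp; tauto⟩
      · exact ⟨h.swap23, by ext; simp; tauto⟩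
      · exact ⟨h.rot, by ext; simp; tauto⟩
      · exact ⟨h.rot', by ext; simp; tauto⟩
      · exact ⟨h.swap13, by ext; simp; tauto⟩
  rw [this]
  simp [Finset.sum_insert, h1, h2, h3, h1.symm, h2.symm, h3.symm, sym6]
  ring

/-- An edge is contained in at most two triangles. -/
lemma OT.third {n : ℕ} {p q r r' c : Pt} (h : OT (n + 1) p q r) (h' : OT (n + 1) p q r')
    (hne : r ≠ r') (hc : OT (n + 1) p q c) : c = r ∨ c = r' := by
  have hd := h.det_ne
  have hd' := h'.det_ne
  have hdc := hc.det_ne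
  by_contra! H
  have e1 : ¬ 0 < det3 p q r * det3 p q r' := fun e => hne (h.eq_of_det h' e)
  have e2 : ¬ 0 < det3 p q c * det3 p q r := fun e => H.1 (hc.eq_of_det h e)
  have e3 : ¬ 0 < det3 p q c * det3 p q r' := fun e => H.2 (hc.eq_of_det h' e)
  rcases lt_or_gt_of_ne hd with d1 | d1 <;> rcases lt_or_gt_of_ne hd' with d2 | d2 <;>
    rcases lt_or_gt_of_ne hdc with d3 | d3 <;>
    first
    | exact e1 (mul_pos d1 d2) | exact e1 (mul_pos_of_neg_of_neg d1 d2)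
    | exact e2 (mul_pos d3 d1) | exact e2 (mul_pos_of_neg_of_neg d3 d1)
    | exact e3 (mul_pos d3 d2) | exact e3 (mul_pos_of_neg_of_neg d3 d2)

/-- The two triangles at an edge have opposite orientations. -/
lemma eps_opp {n : ℕ} {p q r r' : Pt} (h : OT (n + 1) p q r) (h' : OT (n + 1) p q r')
    (hne : r ≠ r') : eps p q r' = - eps p q r := by
  have hd := h.det_ne
  have hd' := h'.det_ne
  have e1 : ¬ 0 < det3 p q r * det3 p q r' := fun e => hne (h.eq_of_det h' e)
  simp only [eps]
  rcases lt_or_gt_of_ne hd with d1 | d1 <;> rcases lt_or_gt_of_ne hd' with d2 | d2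
  · exact absurd (mul_pos_of_neg_of_neg d1 d2) e1
  · rw [Real.sign_of_neg d1, Real.sign_of_pos d2]; norm_num
  · rw [Real.sign_of_pos d1, Real.sign_of_neg d2]
  · exact absurd (mul_pos d1 d2) e1

/-- The ordered triangles whose first edge is a given edge contained in one triangle. -/
lemma sum_OF_edge_one {n : ℕ} {p q r : Pt} (h : OT (n + 1) p q r)
    (hu : ∀ c, OT (n + 1) p q c → c = r) (K : Pt → Pt → Pt → ℝ) :
    (∑ x ∈ OF (n + 1), if ({x.1, x.2.1} : Set Pt) = {p, q} then K x.1 x.2.1 x.2.2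
      else 0) = K p q r + K q p r := by
  have h1 := h.ne12
  rw [← Finset.sum_filter]
  have : (OF (n + 1)).filter (fun x => ({x.1, x.2.1} : Set Pt) = {p, q}) =
      {(p, q, r), (q, p, r)} := by
    ext ⟨a, b, c⟩
    simp only [Finset.mem_filter, mem_OF, Finset.mem_insert, Finset.mem_singleton, Prod.mk.injEq]
    constructor
    · rintro ⟨ho, e⟩
      rcases mem_pair_pair e with ⟨rfl, rfl⟩ | ⟨rfl, rfl⟩
      · simp [hu _ ho]
      · simp [hu _ ho.swap12]
    · rintro (⟨rfl, rfl, rfl⟩ | ⟨rfl, rfl, rfl⟩)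
      · exact ⟨h, rfl⟩
      · exact ⟨h.swap12, Set.pair_comm _ _⟩
  rw [this, Finset.sum_pair (by simp [h1])]

/-- The ordered triangles whose first edge is a given edge contained in two triangles. -/
lemma sum_OF_edge_two {n : ℕ} {p q r r' : Pt} (h : OT (n + 1) p q r) (h' : OT (n + 1) p q r')
    (hne : r ≠ r') (K : Pt → Pt → Pt → ℝ) :
    (∑ x ∈ OF (n + 1), if ({x.1, x.2.1} : Set Pt) = {p, q} then K x.1 x.2.1 x.2.2
      else 0) = K p q r + K q p r + K p q r' + K q p r' := by
  have h1 := h.ne12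
  rw [← Finset.sum_filter]
  have : (OF (n + 1)).filter (fun x => ({x.1, x.2.1} : Set Pt) = {p, q}) =
      {(p, q, r), (q, p, r), (p, q, r'), (q, p, r')} := by
    ext ⟨a, b, c⟩
    simp only [Finset.mem_filter, mem_OF, Finset.mem_insert, Finset.mem_singleton, Prod.mk.injEq]
    constructor
    · rintro ⟨ho, e⟩
      rcases mem_pair_pair e with ⟨rfl, rfl⟩ | ⟨rfl, rfl⟩
      · rcases h.third h' hne ho with rfl | rfl <;> simp
      · rcases h.third h' hne ho.swap12 with rfl | rfl <;> simp
    · rintro (⟨rfl, rfl, rfl⟩ | ⟨rfl, rfl, rfl⟩ | ⟨rfl, rfl, rfl⟩ | ⟨rfl, rfl, rfl⟩)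
      · exact ⟨h, rfl⟩
      · exact ⟨h.swap12, Set.pair_comm _ _⟩
      · exact ⟨h', rfl⟩
      · exact ⟨h'.swap12, Set.pair_comm _ _⟩
  rw [this]
  simp [Finset.sum_insert, h1, h1.symm, hne]
  ring

end Fibres

section Projection
open scoped Classical

/-- The boundary set of the hexacarpet on which potentials are prescribed. -/
def Bdry (v : Set Pt) : Prop :=
  v.Nonempty ∧ (v ⊆ hexSide 0 ∨ v ⊆ hexSide 1 ∨ v ⊆ hexSide 3 ∨ v ⊆ hexSide 4)

lemma exists_TestH : TestH fun v => if v ⊆ hexSide 3 ∨ v ⊆ hexSide 4 then 1 else 0 := by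
  refine ⟨fun v hv h => ?_, fun v hv h => by simp only [h, if_true]⟩
  refine if_neg ?_
  intro h'
  obtain ⟨p, hp⟩ := hv
  have h1 : p ∈ hexSide (0 : Fin 6) ∨ p ∈ hexSide (1 : Fin 6) := h.imp (fun h => h hp) fun h => h hp
  have h2 : p ∈ hexSide (3 : Fin 6) ∨ p ∈ hexSide (4 : Fin 6) :=
    h'.imp (fun h => h hp) fun h => h hp
  rcases h1 with h1 | h1 <;> rcases h2 with h2 | h2 <;>
    (have a := sl_of_mem h1
     have b := sl_of_mem h2
     have c := hexa_side h1 2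
     have d := hexa_side h1 5
     simp [sl, sa, sb] at a b c d
     linarith)

lemma exists_TestT : TestT fun p => if p ∈ hexSide 5 then 1 else 0 := by
  refine ⟨fun p hp => ?_, fun p hp => by simp only [hp, if_true]⟩
  refine if_neg ?_
  intro hp'
  have a := sl_of_mem (i := 2) hp
  have b := sl_of_mem (i := 5) hp'
  simp [sl, sa, sb] at a b
  linarith

/-- Existence of the potential of minimal energy on the hexacarpet, characterized by
orthogonality. -/
lemma exists_harmonic (n : ℕ) : ∃ g, TestH g ∧ ∀ ψ : Set Pt → ℝ, (∀ v, Bdry v → ψ v = 0) →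
    ∑ x ∈ OF n, (g {x.1, x.2.1} - g {x.1, x.2.1, x.2.2}) *
      (ψ {x.1, x.2.1} - ψ {x.1, x.2.1, x.2.2}) = 0 := by
  let d : (Set Pt → ℝ) →ₗ[ℝ] EuclideanSpace ℝ (OF n) :=
    { toFun := fun g => WithLp.toLp 2 fun x => g {x.1.1, x.1.2.1} - g {x.1.1, x.1.2.1, x.1.2.2}
      map_add' := fun g g' => by ext x; simp; ring
      map_smul' := fun c g => by ext x; simp; ring }
  let S : Submodule ℝ (Set Pt → ℝ) :=
    { carrier := {ψ | ∀ v, Bdry v → ψ v = 0}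
      add_mem' := fun {a b} ha hb v hv => by simp [ha v hv, hb v hv]
      zero_mem' := fun v hv => rfl
      smul_mem' := fun c a ha v hv => by simp [ha v hv] }
  obtain ⟨k, ⟨φ, hφ, rfl⟩, w, hw, e⟩ :=
    (S.map d).exists_add_mem_mem_orthogonal (d fun v => if v ⊆ hexSide 3 ∨ v ⊆ hexSide 4 then 1 else 0)
  refine ⟨(fun v => if v ⊆ hexSide 3 ∨ v ⊆ hexSide 4 then 1 else 0) - φ, ?_, fun ψ hψ => ?_⟩
  · refine ⟨fun v hv h => ?_, fun v hv h => ?_⟩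
    · have h1 := exists_TestH.1 v hv h
      have h2 := hφ v ⟨hv, by tauto⟩
      simp only [Pi.sub_apply, h1, h2, sub_zero]
    · have h1 := exists_TestH.2 v hv h
      have h2 := hφ v ⟨hv, by tauto⟩
      simp only [Pi.sub_apply, h1, h2, sub_zero]
  · have h1 : d ((fun v => if v ⊆ hexSide 3 ∨ v ⊆ hexSide 4 then 1 else 0) - φ) = w := by
      rw [map_sub, e]; simp
    have h2 := (Submodule.mem_orthogonal _ _).1 hw (d ψ) ⟨ψ, hψ, rfl⟩
    rw [← h1, PiLp.inner_apply] at h2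
    rw [← Finset.sum_coe_sort]
    convert h2 using 2 with x
    rfl

end Projection

/-! ### Strong duality -/

section Duality
open scoped Classical

lemma OT.tri_ne_pair {n : ℕ} {p q r a b : Pt} (h : OT (n + 1) p q r) :
    ({a, b} : Set Pt) ≠ {p, q, r} := triple_ne_pair h.ne12 h.ne13 h.ne23

lemma OT.tri_not_side {n : ℕ} {p q r : Pt} (h : OT (n + 1) p q r) (i : Fin 6) :
    ¬ ({p, q, r} : Set Pt) ⊆ hexSide i := fun hs =>
  h.not_side (hs (by simp)) (hs (by simp)) (hs (by simp))

lemma OT.tri_not_bdry {n : ℕ} {p q r : Pt} (h : OT (n + 1) p q r) : ¬ Bdry {p, q, r} := by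
  rintro ⟨-, hs | hs | hs | hs⟩
  exacts [h.tri_not_side 0 hs, h.tri_not_side 1 hs, h.tri_not_side 3 hs, h.tri_not_side 4 hs]

/-- Kirchhoff's law at a triangle. -/
lemma kirchhoff_triangle {n : ℕ} {g : Set Pt → ℝ}
    (hg : ∀ ψ : Set Pt → ℝ, (∀ v, Bdry v → ψ v = 0) →
      ∑ x ∈ OF (n + 1), (g {x.1, x.2.1} - g {x.1, x.2.1, x.2.2}) *
        (ψ {x.1, x.2.1} - ψ {x.1, x.2.1, x.2.2}) = 0) {p q r : Pt} (h : OT (n + 1) p q r) :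
    g {p, q} + g {q, r} + g {r, p} = 3 * g {p, q, r} := by
  have e : sym6 (fun a b c => g {a, b, c} - g {a, b}) p q r = 0 := by
    rw [← sum_OF_triangle h]
    refine Eq.trans ?_ (hg (fun v => if v = {p, q, r} then 1 else 0) fun v hv => ?_)
    · refine Finset.sum_congr rfl fun x _ => ?_
      simp only [h.tri_ne_pair, if_false]
      split_ifs <;> ring
    · refine if_neg ?_
      rintro rfl
      exact h.tri_not_bdry hv
  have s3 : ({q, r, p} : Set Pt) = {p, q, r} := by ext; simp; tauto
  have s4 : ({r, p, q} : Set Pt) = {p, q, r} := by ext; simp; tauto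
  simp only [sym6, s3, s4, Set.pair_comm q p, Set.pair_comm r q,
    Set.pair_comm p r] at e
  linarith

/-- Kirchhoff's law at an edge. -/
lemma kirchhoff_edge {n : ℕ} {g : Set Pt → ℝ}
    (hg : ∀ ψ : Set Pt → ℝ, (∀ v, Bdry v → ψ v = 0) →
      ∑ x ∈ OF (n + 1), (g {x.1, x.2.1} - g {x.1, x.2.1, x.2.2}) *
        (ψ {x.1, x.2.1} - ψ {x.1, x.2.1, x.2.2}) = 0) {p q : Pt} (hb : ¬ Bdry {p, q}) :
    (∑ x ∈ OF (n + 1), if ({x.1, x.2.1} : Set Pt) = {p, q} then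
      g {x.1, x.2.1} - g {x.1, x.2.1, x.2.2} else 0) = 0 := by
  refine Eq.trans ?_ (hg (fun v => if v = {p, q} then 1 else 0) fun v hv => ?_)
  · refine Finset.sum_congr rfl ?_
    rintro ⟨a, b, c⟩ hx
    have : ({a, b, c} : Set Pt) ≠ {p, q} := ((mem_OF.1 hx).tri_ne_pair).symm
    simp [this]
  · refine if_neg ?_
    rintro rfl
    exact hb hv

/-- Two distinct sides have at most one common point. -/
lemma side_inter {p q : Pt} {i j : Fin 6} (hij : i ≠ j) (h1 : p ∈ hexSide i) (h2 : q ∈ hexSide i)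
    (h3 : p ∈ hexSide j) (h4 : q ∈ hexSide j) : p = q := by
  have a1 := sl_of_mem h1
  have a2 := sl_of_mem h2
  have a3 := sl_of_mem h3
  have a4 := sl_of_mem h4
  fin_cases i <;> fin_cases j <;> simp [sl, sa, sb] at a1 a2 a3 a4 hij <;>
    exact pt_ext (by linarith) (by linarith)

/-- The optimal potential on the hexacarpet is conjugate to a potential on the vertices, so that
equality is attained in `four_le`. -/
lemma exists_dual (n : ℕ) :
    ∃ f g, TestT f ∧ TestH g ∧ DT (n + 1) f * DH (n + 1) g = 4 := by
  obtain ⟨g, hT, hg⟩ := exists_harmonic (n + 1)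
  have kt := fun p q r (h : OT (n + 1) p q r) => kirchhoff_triangle hg h
  -- an edge in a single triangle whose potential is not prescribed carries no current
  have ke : ∀ p q r, OT (n + 1) p q r → ¬ Bdry {p, q} → (∀ c, OT (n + 1) p q c → c = r) →
      g {p, q, r} - g {p, q} = 0 := by
    intro p q r h hb hu
    have e := (sum_OF_edge_one h hu fun a b c => g {a, b} - g {a, b, c}).symm.trans
      (kirchhoff_edge hg hb)
    simp only [Set.pair_comm q p, Set.insert_comm q p] at e
    linarith
  have hw : ∀ p q r r', OT (n + 1) p q r → OT (n + 1) p q r' →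
      eps p q r * (g {p, q, r} - g {p, q}) = eps p q r' * (g {p, q, r'} - g {p, q}) := by
    intro p q r r' h h'
    by_cases hne : r = r'
    · rw [hne]
    have hb : ¬ Bdry {p, q} := by
      rintro ⟨-, hs | hs | hs | hs⟩
      · exact hne (h.side_unique h' (i := 0) (hs (by simp)) (hs (by simp)))
      · exact hne (h.side_unique h' (i := 1) (hs (by simp)) (hs (by simp)))
      · exact hne (h.side_unique h' (i := 3) (hs (by simp)) (hs (by simp)))
      · exact hne (h.side_unique h' (i := 4) (hs (by simp)) (hs (by simp)))
    have e := (sum_OF_edge_two h h' hne fun a b c => g {a, b} - g {a, b, c}).symm.trans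
      (kirchhoff_edge hg hb)
    simp only [Set.pair_comm q p, Set.insert_comm q p] at e
    rw [eps_opp h h' hne]
    linear_combination - eps p q r / 2 * e
  -- the current through the edge `{p, q}`, as an oriented quantity; by Kirchhoff's law at the edge
  -- it does not depend on the triangle
  let ω : Pt → Pt → ℝ := fun p q => if h : ∃ r, OT (n + 1) p q r then
    eps p q h.choose * (g {p, q, h.choose} - g {p, q}) else 0
  have hω : ∀ p q r, OT (n + 1) p q r → ω p q = eps p q r * (g {p, q, r} - g {p, q}) := by
    intro p q r h
    have h' : ∃ r, OT (n + 1) p q r := ⟨r, h⟩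
    simp only [ω, h', dif_pos]
    exact hw _ _ _ _ h'.choose_spec h
  obtain ⟨F, hF⟩ := poincare n (ω := ω)
    (fun p q r h => by
      rw [hω _ _ _ h, hω _ _ _ h.swap12, eps_swap12, Set.pair_comm q p, Set.insert_comm q p]
      ring)
    (fun p q r h => by
      have s1 : ({q, r, p} : Set Pt) = {p, q, r} := by ext; simp; tauto
      have s2 : ({r, p, q} : Set Pt) = {p, q, r} := by ext; simp; tauto
      rw [hω _ _ _ h, hω _ _ _ h.rot, hω _ _ _ h.rot', eps_rot p q r, eps_rot r p q |>.symm,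
        s1, s2]
      have := kt _ _ _ h
      linear_combination - eps p q r * this)
  have hside : ∀ i : Fin 6, i = 2 ∨ i = 5 → ∀ p q r, OT (n + 1) p q r → p ∈ hexSide i →
      F p = F (hexCorner i) := by
    intro i hi
    refine side_const n i fun p q r h hp hq => ?_
    have : ω p q = 0 := by
      rw [hω _ _ _ h, ke _ _ _ h ?_ fun c hc => hc.side_unique h hp hq, mul_zero]
      rintro ⟨-, hs⟩
      have hs : ∃ j : Fin 6, i ≠ j ∧ ({p, q} : Set Pt) ⊆ hexSide j := by
        rcases hs with hs | hs | hs | hs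
        exacts [⟨0, by rcases hi with rfl | rfl <;> decide, hs⟩,
          ⟨1, by rcases hi with rfl | rfl <;> decide, hs⟩,
          ⟨3, by rcases hi with rfl | rfl <;> decide, hs⟩,
          ⟨4, by rcases hi with rfl | rfl <;> decide, hs⟩]
      obtain ⟨j, hij, hs⟩ := hs
      exact h.ne12 (side_inter hij hp hq (hs (by simp)) (hs (by simp)))
    linarith [hF _ _ _ h]
  obtain ⟨s, hs⟩ : ∃ s, s = F (hexCorner 2) := ⟨_, rfl⟩
  obtain ⟨t, ht⟩ : ∃ t, t = F (hexCorner 5) := ⟨_, rfl⟩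
  -- `F` is constant on the vertices of the sides `2` and `5`, and is extended to all their points
  let F' : Pt → ℝ := fun p => if p ∈ hexSide 5 then t else if p ∈ hexSide 2 then s else F p
  have hF' : ∀ p q r, OT (n + 1) p q r → F' p = F p := by
    intro p q r h
    simp only [F']
    split_ifs with h1 h2
    · rw [ht]; exact (hside 5 (by simp) _ _ _ h h1).symm
    · rw [hs]; exact (hside 2 (by simp) _ _ _ h h2).symm
    · rfl
  have hF5 : ∀ p ∈ hexSide 5, F' p = t := fun p hp => if_pos hp
  have hF2 : ∀ p ∈ hexSide 2, F' p = s := fun p hp => by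
    have : p ∉ hexSide 5 := fun h5 => by
      have e0 := exists_TestT.1 p hp
      have e1 := exists_TestT.2 p h5
      rw [e0] at e1; norm_num at e1
    simp only [F', this, hp, if_false, if_true]
  have hgrad : ∀ p q r, OT (n + 1) p q r → F' q - F' p = eps p q r * (g {p, q, r} - g {p, q}) := by
    intro p q r h
    rw [hF' _ _ _ h, hF' _ _ _ h.swap12, hF _ _ _ h, hω _ _ _ h]
  have hD : DT (n + 1) F' = DH (n + 1) g := by
    refine Finset.sum_congr rfl ?_
    rintro ⟨p, q, r⟩ hx
    have h := mem_OF.1 hx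
    simp only
    have := hgrad _ _ _ h
    have e2 := h.eps_sq
    have e3 : (F' p - F' q) ^ 2 = (F' q - F' p) ^ 2 := by ring
    rw [e3, this]
    linear_combination (g {p, q, r} - g {p, q}) ^ 2 * e2
  have hP : - DH (n + 1) g = 2 * (t - s) := by
    rw [← pairing n hF2 hF5 hT, DH, ← Finset.sum_neg_distrib]
    refine Finset.sum_congr rfl ?_
    rintro ⟨p, q, r⟩ hx
    have h := mem_OF.1 hx
    simp only
    have e2 := h.eps_sq
    rw [hgrad _ _ _ h]
    linear_combination (g {p, q, r} - g {p, q}) ^ 2 * e2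
  have hpos : DH (n + 1) g ≠ 0 := by
    intro h0
    have := four_le n exists_TestT hT
    rw [h0] at this; norm_num at this
  have hts : t - s ≠ 0 := fun h => hpos (by rw [h] at hP; linarith)
  refine ⟨fun p => (F' p - s) / (t - s), g, ⟨fun p hp => ?_, fun p hp => ?_⟩, hT, ?_⟩
  · simp only [hF2 p hp, sub_self, zero_div]
  · simp only [hF5 p hp]; exact div_self hts
  · have : DT (n + 1) (fun p => (F' p - s) / (t - s)) = DT (n + 1) F' / (t - s) ^ 2 := by
      rw [DT, DT, Finset.sum_div]
      refine Finset.sum_congr rfl fun x _ => ?_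
      rw [← div_pow]; congr 1; ring
    rw [this, hD]
    have e : DH (n + 1) g = -2 * (t - s) := by linarith
    rw [e]; field_simp; norm_num

end Duality

/-! ### Growth rate of the minimal energies -/

section Growth
open scoped Classical
open Filter Topology

/-- The minimal Dirichlet sum of an admissible potential on the vertices of `T_n`. -/
def dT (n : ℕ) : ℝ := sInf {e | ∃ f, TestT f ∧ e = DT n f}

/-- The minimal Dirichlet sum of an admissible potential on the hexacarpet. -/
def dH (n : ℕ) : ℝ := sInf {e | ∃ g, TestH g ∧ e = DH n g}

lemma DT_nonneg (n : ℕ) (f : Pt → ℝ) : 0 ≤ DT n f := Finset.sum_nonneg fun _ _ => sq_nonneg _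
lemma DH_nonneg (n : ℕ) (g : Set Pt → ℝ) : 0 ≤ DH n g := Finset.sum_nonneg fun _ _ => sq_nonneg _

/-- By weak duality, a pair for which the product of the energies is `4` consists of minimizers. -/
lemma minimizers (n : ℕ) : ∃ f g, TestT f ∧ TestH g ∧ dT (n + 1) = DT (n + 1) f ∧
    dH (n + 1) = DH (n + 1) g ∧ DT (n + 1) f * DH (n + 1) g = 4 := by
  obtain ⟨f, g, hf, hg, e⟩ := exists_dual n
  have p1 : 0 < DT (n + 1) f := lt_of_le_of_ne (DT_nonneg _ _) fun h => by
    rw [← h] at e; norm_num at e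
  have p2 : 0 < DH (n + 1) g := lt_of_le_of_ne (DH_nonneg _ _) fun h => by
    rw [← h] at e; norm_num at e
  refine ⟨f, g, hf, hg, IsLeast.csInf_eq ⟨⟨f, hf, rfl⟩, ?_⟩, IsLeast.csInf_eq ⟨⟨g, hg, rfl⟩, ?_⟩, e⟩
  · rintro _ ⟨f', hf', rfl⟩
    have := four_le n hf' hg
    exact le_of_mul_le_mul_right (by linarith) p2
  · rintro _ ⟨g', hg', rfl⟩
    have := four_le n hf hg'
    exact le_of_mul_le_mul_left (by linarith) p1

lemma dT_le {n : ℕ} {f : Pt → ℝ} (hf : TestT f) : dT n ≤ DT n f :=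
  csInf_le ⟨0, by rintro _ ⟨f, -, rfl⟩; exact DT_nonneg _ _⟩ ⟨f, hf, rfl⟩

lemma dH_le {n : ℕ} {g : Set Pt → ℝ} (hg : TestH g) : dH n ≤ DH n g :=
  csInf_le ⟨0, by rintro _ ⟨f, -, rfl⟩; exact DH_nonneg _ _⟩ ⟨g, hg, rfl⟩

lemma dT_mul_dH (n : ℕ) : dT (n + 1) * dH (n + 1) = 4 := by
  obtain ⟨f, g, -, -, e1, e2, e⟩ := minimizers n
  rw [e1, e2, e]

lemma dT_pos (n : ℕ) : 0 < dT (n + 1) := by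
  obtain ⟨f, g, -, -, e1, e2, e⟩ := minimizers n
  rw [e1]
  exact lt_of_le_of_ne (DT_nonneg _ _) fun h => by rw [← h] at e; norm_num at e

lemma dT_submult (m k : ℕ) : dT (m + 1 + (k + 1)) ≤ 24 * dT (m + 1) * dT (k + 1) := by
  obtain ⟨f, -, hf, -, e1, -⟩ := minimizers m
  obtain ⟨h, -, hh, -, e2, -⟩ := minimizers k
  obtain ⟨F, hF, hle⟩ := submult m k hf hh
  rw [e1, e2]
  exact (dT_le hF).trans hle

lemma card_OF (n : ℕ) : ((OF (n + 1)).card : ℝ) = 6 ^ (n + 2) := by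
  induction n with
  | zero =>
    have := sum_OF_one' fun _ _ _ => 1
    simp [sym6] at this
    rw [this]; norm_num
  | succ n ih =>
    have := sum_OF_succ n fun _ _ _ => 1
    simp [sym6] at this
    rw [this, ih, pow_succ _ (n + 2)]
    ring

/-- A crude lower bound, from a competitor for the dual problem. -/
lemma dT_lower (n : ℕ) : 4 ≤ dT (n + 1) * 6 ^ (n + 2) := by
  rw [← dT_mul_dH n, ← card_OF]
  refine mul_le_mul_of_nonneg_left ((dH_le exists_TestH).trans ?_) (dT_pos n).le
  rw [Finset.card_eq_sum_ones, Nat.cast_sum]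
  refine Finset.sum_le_sum fun x _ => ?_
  simp only
  split_ifs <;> norm_num

/-- Fekete's lemma for the submultiplicative sequence `24 * dT n`. -/
lemma dT_limit : ∃ L, Tendsto (fun n : ℕ => Real.log (dT n) / n) atTop (𝓝 L) := by
  let u : ℕ → ℝ := fun n => if n = 0 then 0 else Real.log (24 * dT n)
  have hu : ∀ n, u (n + 1) = Real.log (24 * dT (n + 1)) := fun n => if_neg (by omega)
  have hsub : Subadditive u := by
    intro m k
    rcases m with - | m
    · simp [u]
    rcases k with - | k
    · simp [u]
    have e : m + 1 + (k + 1) = (m + 1 + k) + 1 := by ring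
    have hm := dT_pos m
    have hk := dT_pos k
    rw [hu, hu, e, hu, ← e, ← Real.log_mul (by positivity) (by positivity)]
    have := dT_pos (m + 1 + k)
    rw [← e] at this
    refine Real.log_le_log (by positivity) ?_
    have := dT_submult m k
    linarith
  have hbdd : BddBelow (Set.range fun n => u n / n) := by
    refine ⟨-(2 * Real.log 6), ?_⟩
    have h6 : 0 ≤ Real.log 6 := Real.log_nonneg (by norm_num)
    rintro _ ⟨n, rfl⟩
    rcases n with - | n
    · simp [u]; exact h6
    simp only
    have hn := dT_pos n
    rw [le_div_iff₀ (by positivity), hu]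
    have h1 : 1 ≤ 24 * dT (n + 1) * 6 ^ (n + 2) := by linarith [dT_lower n]
    have h2 := Real.log_nonneg h1
    rw [Real.log_mul (by positivity) (by positivity), Real.log_pow] at h2
    push_cast at h2 ⊢
    nlinarith [mul_nonneg (Nat.cast_nonneg (α := ℝ) n) h6]
  have hlim := hsub.tendsto_lim hbdd
  have h24 : Tendsto (fun n : ℕ => Real.log 24 / (n : ℝ)) atTop (𝓝 0) :=
    tendsto_const_div_atTop_nhds_zero_nat _
  refine ⟨hsub.lim - 0, (hlim.sub h24).congr' ?_⟩
  filter_upwards [eventually_ge_atTop 1] with n hn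
  obtain ⟨n, rfl⟩ := Nat.exists_eq_add_of_le' hn
  rw [hu, Real.log_mul (by norm_num) (dT_pos n).ne', ← sub_div, add_sub_cancel_left]

/-- Sequences that are comparable up to constants have the same exponential growth rate. -/
lemma limit_of_comparable {a b : ℕ → ℝ} {c C L : ℝ} (hc : 0 < c)
    (ha : ∀ n, 0 < a (n + 1)) (h1 : ∀ n, c * a (n + 1) ≤ b (n + 1))
    (h2 : ∀ n, b (n + 1) ≤ C * a (n + 1))
    (hL : Tendsto (fun n : ℕ => Real.log (a n) / n) atTop (𝓝 L)) :
    Tendsto (fun n : ℕ => Real.log (b n) / n) atTop (𝓝 L) := by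
  have hC : 0 < C := by
    have := ha 0
    have h : 0 < C * a (0 + 1) := lt_of_lt_of_le (mul_pos hc this) ((h1 0).trans (h2 0))
    exact (pos_iff_pos_of_mul_pos h).2 this
  have e : ∀ c : ℝ, Tendsto (fun n : ℕ => Real.log c / n + Real.log (a n) / n) atTop (𝓝 L) :=
    fun c => by
      have := (tendsto_const_div_atTop_nhds_zero_nat (Real.log c)).add hL
      rwa [zero_add] at this
  refine tendsto_of_tendsto_of_tendsto_of_le_of_le' (e c) (e C) ?_ ?_
  · filter_upwards [eventually_ge_atTop 1] with n hn
    obtain ⟨n, rfl⟩ := Nat.exists_eq_add_of_le' hn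
    have := ha n
    rw [← add_div, ← Real.log_mul hc.ne' this.ne']
    gcongr
    exact h1 n
  · filter_upwards [eventually_ge_atTop 1] with n hn
    obtain ⟨n, rfl⟩ := Nat.exists_eq_add_of_le' hn
    have := ha n
    have hb : 0 < b (n + 1) := lt_of_lt_of_le (mul_pos hc this) (h1 n)
    rw [← add_div, ← Real.log_mul hC.ne' this.ne']
    gcongr
    exact h2 n

end Growth

/-! ### Comparison with the energies of the weighted graphs -/

section Comparison
open scoped Classical

/-- Comparison of the energy on a weighted graph with a sum over a finite set that parametrizes
the edges of the graph with bounded multiplicity. -/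
lemma energy_compare {ι V : Type} (O : Finset ι) (φ : ι → V × V) (c : V → V → ℝ) {A B : ℝ} {M : ℕ}
    (h1 : ∀ x ∈ O, 1 ≤ A * c (φ x).1 (φ x).2) (h2 : ∀ p q, c p q ≠ 0 → ∃ x ∈ O, φ x = (p, q))
    (h3 : ∀ p q, c p q ≤ B) (hB : 0 ≤ B)
    (h4 : ∀ y, (O.filter fun x => φ x = y).card ≤ M) (f : V → ℝ) :
    2 * energy c f ≤ B * ∑ x ∈ O, (f (φ x).1 - f (φ x).2) ^ 2 ∧
      ∑ x ∈ O, (f (φ x).1 - f (φ x).2) ^ 2 ≤ 2 * M * A * energy c f := by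
  have he : energy c f = 1 / 2 * ∑ y ∈ O.image φ, c y.1 y.2 * (f y.1 - f y.2) ^ 2 := by
    have z : ∀ p q, ¬ (p, q) ∈ O.image φ → c p q * (f p - f q) ^ 2 = 0 := by
      intro p q h
      by_contra h0
      obtain ⟨x, hx, e⟩ := h2 p q fun e => h0 (by rw [e, zero_mul])
      exact h (Finset.mem_image.2 ⟨x, hx, e⟩)
    rw [energy]
    congr 1
    let P := (O.image φ).image Prod.fst
    let Q := (O.image φ).image Prod.snd
    have hQ : ∀ p, ∑' q, c p q * (f p - f q) ^ 2 = ∑ q ∈ Q, c p q * (f p - f q) ^ 2 := fun p =>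
      tsum_eq_sum fun q hq => z p q fun h => hq (Finset.mem_image.2 ⟨_, h, rfl⟩)
    simp only [hQ]
    rw [tsum_eq_sum (s := P) fun p hp => Finset.sum_eq_zero fun q _ => z p q fun h =>
      hp (Finset.mem_image.2 ⟨_, h, rfl⟩)]
    rw [← Finset.sum_product' P Q fun p q => c p q * (f p - f q) ^ 2]
    symm
    refine Finset.sum_subset (fun y hy => ?_) fun y _ hy => z y.1 y.2 hy
    exact Finset.mem_product.2 ⟨Finset.mem_image_of_mem _ hy, Finset.mem_image_of_mem _ hy⟩
  have hs : ∑ x ∈ O, (f (φ x).1 - f (φ x).2) ^ 2 =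
      ∑ y ∈ O.image φ, ((O.filter fun x => φ x = y).card : ℝ) * (f y.1 - f y.2) ^ 2 := by
    rw [Finset.sum_comp (fun y : V × V => (f y.1 - f y.2) ^ 2) φ]
    simp only [nsmul_eq_mul]
  rw [he, hs]
  constructor
  · rw [← mul_assoc, Finset.mul_sum, Finset.mul_sum]
    refine Finset.sum_le_sum fun y hy => ?_
    obtain ⟨x, hx, rfl⟩ := Finset.mem_image.1 hy
    have hc : (1 : ℝ) ≤ (O.filter fun x' => φ x' = φ x).card := by
      exact_mod_cast Finset.card_pos.2 ⟨x, by simp [hx]⟩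
    have := h3 (φ x).1 (φ x).2
    have sq := sq_nonneg (f (φ x).1 - f (φ x).2)
    calc 2 * (1 / 2) * (c (φ x).1 (φ x).2 * (f (φ x).1 - f (φ x).2) ^ 2)
        ≤ B * (1 * (f (φ x).1 - f (φ x).2) ^ 2) := by nlinarith
      _ ≤ _ := by gcongr
  · rw [← mul_assoc, Finset.mul_sum]
    refine Finset.sum_le_sum fun y hy => ?_
    have hM : ((O.filter fun x' => φ x' = y).card : ℝ) ≤ M := by exact_mod_cast h4 y
    obtain ⟨x, hx, rfl⟩ := Finset.mem_image.1 hy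
    have := h1 x hx
    have sq := sq_nonneg (f (φ x).1 - f (φ x).2)
    calc _ ≤ (M : ℝ) * (f (φ x).1 - f (φ x).2) ^ 2 := by gcongr
      _ ≤ M * ((A * c (φ x).1 (φ x).2) * (f (φ x).1 - f (φ x).2) ^ 2) := by
        gcongr
        nlinarith
      _ = _ := by ring

lemma mem_Simp1 {n : ℕ} {u : Set Pt} : u ∈ Simp1 n ↔ ∃ p q r, OT n p q r ∧ u = {p, q} := by
  constructor
  · rintro ⟨⟨p, q, r⟩, h, rfl | rfl | rfl⟩
    · exact ⟨p, q, r, .inl h, rfl⟩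
    · exact ⟨q, r, p, (OT.of_mem h).rot, rfl⟩
    · exact ⟨p, r, q, (OT.of_mem h).swap23, rfl⟩
  · rintro ⟨p, q, r, h, rfl⟩
    rcases h with h | h | h | h | h | h
    · exact ⟨_, h, .inl rfl⟩
    · exact ⟨_, h, .inl (Set.pair_comm _ _)⟩
    · exact ⟨_, h, .inr (.inr rfl)⟩
    · exact ⟨_, h, .inr (.inr (Set.pair_comm _ _))⟩
    · exact ⟨_, h, .inr (.inl rfl)⟩
    · exact ⟨_, h, .inr (.inl (Set.pair_comm _ _))⟩

lemma mem_Simp2 {n : ℕ} {v : Set Pt} : v ∈ Simp2 n ↔ ∃ p q r, OT n p q r ∧ v = {p, q, r} := by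
  constructor
  · rintro ⟨⟨p, q, r⟩, h, rfl⟩
    exact ⟨p, q, r, .inl h, rfl⟩
  · rintro ⟨p, q, r, h, rfl⟩
    rcases h with h | h | h | h | h | h <;> exact ⟨_, h, by ext; simp; try tauto⟩

lemma mem_Simp0 {n : ℕ} {p q r : Pt} (h : OT n p q r) : p ∈ Simp0 n := by
  rcases h with h | h | h | h | h | h <;> exact ⟨_, h, by simp⟩

lemma cT_compare (n : ℕ) (f : Pt → ℝ) :
    energy (cT (n + 1)) f ≤ DT (n + 1) f ∧ DT (n + 1) f ≤ 4 * energy (cT (n + 1)) f := by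
  have h := energy_compare (OF (n + 1)) (fun x => (x.1, x.2.1)) (cT (n + 1)) (A := 1) (B := 2)
    (M := 2) ?_ ?_ ?_ (by norm_num) ?_ f
  · simp only [DT]
    refine ⟨by linarith [h.1], ?_⟩
    have := h.2
    push_cast at this
    linarith
  · rintro ⟨p, q, r⟩ hx
    have ho := mem_OF.1 hx
    have : p ≠ q ∧ ({p, q} : Set Pt) ∈ Simp1 (n + 1) := ⟨ho.ne12, mem_Simp1.2 ⟨_, _, _, ho, rfl⟩⟩
    show 1 ≤ 1 * cT (n + 1) p q
    rw [cT, if_pos this]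
    split_ifs <;> norm_num
  · intro p q h0
    have : p ≠ q ∧ ({p, q} : Set Pt) ∈ Simp1 (n + 1) := by
      by_contra h; exact h0 (if_neg h)
    obtain ⟨a, b, r, ho, e⟩ := mem_Simp1.1 this.2
    rcases mem_pair_pair e with ⟨rfl, rfl⟩ | ⟨rfl, rfl⟩
    · exact ⟨(p, q, r), mem_OF.2 ho, rfl⟩
    · exact ⟨(p, q, r), mem_OF.2 ho.swap12, rfl⟩
  · intro p q
    simp only [cT]
    split_ifs <;> norm_num
  · rintro ⟨p, q⟩
    by_contra! hlt
    obtain ⟨⟨p1, q1, a⟩, ha, ⟨p2, q2, b⟩, hb, ⟨p3, q3, c⟩, hc, hab, hac, hbc⟩ :=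
      Finset.two_lt_card.1 hlt
    simp only [Finset.mem_filter, mem_OF, Prod.mk.injEq] at ha hb hc
    obtain ⟨ha, rfl, rfl⟩ := ha
    obtain ⟨hb, rfl, rfl⟩ := hb
    obtain ⟨hc, rfl, rfl⟩ := hc
    rcases ha.third hb (fun e => hab (by rw [e])) hc with rfl | rfl
    · exact hac rfl
    · exact hbc rfl

lemma card_triangle (n : ℕ) (v : Set Pt) :
    ((OF (n + 1)).filter fun x => ({x.1, x.2.1, x.2.2} : Set Pt) = v).card ≤ 6 := by
  by_cases h : ∃ p q r, OT (n + 1) p q r ∧ v = {p, q, r}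
  · obtain ⟨p, q, r, ho, rfl⟩ := h
    have := sum_OF_triangle ho fun _ _ _ => 1
    rw [← Finset.sum_filter, Finset.sum_const, nsmul_eq_mul, mul_one] at this
    have e : (((OF (n + 1)).filter fun x => ({x.1, x.2.1, x.2.2} : Set Pt) = {p, q, r}).card : ℝ)
      ≤ 6 := by rw [this]; norm_num [sym6]
    exact_mod_cast e
  · rw [Finset.filter_eq_empty_iff.2]
    · simp
    · rintro ⟨p, q, r⟩ hx e
      exact h ⟨p, q, r, mem_OF.1 hx, e.symm⟩

lemma edge_of_subset {n : ℕ} {u v : Set Pt} (hu : u ∈ Simp1 (n + 1)) (hv : v ∈ Simp2 (n + 1))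
    (h : u ⊆ v) : ∃ p q r, OT (n + 1) p q r ∧ u = {p, q} ∧ v = {p, q, r} := by
  obtain ⟨a, b, c, ho, rfl⟩ := mem_Simp1.1 hu
  obtain ⟨p, q, r, ho', rfl⟩ := mem_Simp2.1 hv
  have ha : a ∈ ({p, q, r} : Set Pt) := h (by simp)
  have hb : b ∈ ({p, q, r} : Set Pt) := h (by simp)
  have hne := ho.ne12
  simp only [Set.mem_insert_iff, Set.mem_singleton_iff] at ha hb
  rcases ha with rfl | rfl | rfl <;> rcases hb with rfl | rfl | rfl <;>
    first
    | exact absurd rfl hne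
    | exact ⟨_, _, _, ho', rfl, rfl⟩
    | exact ⟨_, _, _, ho'.swap12, rfl, by ext; simp; tauto⟩
    | exact ⟨_, _, _, ho'.swap23, rfl, by ext; simp; tauto⟩
    | exact ⟨_, _, _, ho'.rot, rfl, by ext; simp; tauto⟩
    | exact ⟨_, _, _, ho'.rot', rfl, by ext; simp; tauto⟩
    | exact ⟨_, _, _, ho'.swap13, rfl, by ext; simp; tauto⟩

lemma cH_compare (n : ℕ) (g : Set Pt → ℝ) :
    energy (cH (n + 1)) g ≤ DH (n + 1) g ∧ DH (n + 1) g ≤ 24 * energy (cH (n + 1)) g := by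
  have h := energy_compare (OF (n + 1) ×ˢ (Finset.univ : Finset Bool))
    (fun y => if y.2 then (({y.1.1, y.1.2.1} : Set Pt), ({y.1.1, y.1.2.1, y.1.2.2} : Set Pt)) else
      (({y.1.1, y.1.2.1, y.1.2.2} : Set Pt), ({y.1.1, y.1.2.1} : Set Pt)))
    (cH (n + 1)) (A := 2) (B := 1 / 2) (M := 12) ?_ ?_ ?_ (by norm_num) ?_ g
  · have e : ∀ x : Pt × Pt × Pt, (g {x.1, x.2.1, x.2.2} - g {x.1, x.2.1}) ^ 2 =
        (g {x.1, x.2.1} - g {x.1, x.2.1, x.2.2}) ^ 2 := fun x => by ring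
    simp only [Finset.sum_product, Fintype.sum_bool, if_true, Bool.false_eq_true, if_false, e,
      Finset.sum_add_distrib] at h
    simp only [DH]
    obtain ⟨h1, h2⟩ := h
    push_cast at h2
    constructor <;> linarith [DH_nonneg (n + 1) g]
  · rintro ⟨⟨p, q, r⟩, b⟩ hx
    have ho := mem_OF.1 (Finset.mem_product.1 hx).1
    have hu : ({p, q} : Set Pt) ∈ Simp1 (n + 1) := mem_Simp1.2 ⟨_, _, _, ho, rfl⟩
    have hv : ({p, q, r} : Set Pt) ∈ Simp2 (n + 1) := mem_Simp2.2 ⟨_, _, _, ho, rfl⟩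
    have hs : ({p, q} : Set Pt) ⊆ {p, q, r} := by intro x; simp; tauto
    cases b <;> simp only [if_true, Bool.false_eq_true, if_false, cH, hu, hv, hs, true_and,
      or_true, true_or] <;> norm_num
  · intro u v h0
    have : (u ∈ Simp1 (n + 1) ∧ v ∈ Simp2 (n + 1) ∧ u ⊆ v) ∨
        (v ∈ Simp1 (n + 1) ∧ u ∈ Simp2 (n + 1) ∧ v ⊆ u) := by
      by_contra h; exact h0 (if_neg h)
    rcases this with ⟨hu, hv, hs⟩ | ⟨hu, hv, hs⟩ <;>
      obtain ⟨p, q, r, ho, rfl, rfl⟩ := edge_of_subset hu hv hs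
    · exact ⟨((p, q, r), true), by simp [ho], rfl⟩
    · exact ⟨((p, q, r), false), by simp [ho], rfl⟩
  · intro u v
    simp only [cH]
    split_ifs <;> norm_num
  · rintro ⟨u, v⟩
    have hsub : ((OF (n + 1) ×ˢ (Finset.univ : Finset Bool)).filter fun y =>
        (if y.2 then (({y.1.1, y.1.2.1} : Set Pt), ({y.1.1, y.1.2.1, y.1.2.2} : Set Pt)) else
        (({y.1.1, y.1.2.1, y.1.2.2} : Set Pt), ({y.1.1, y.1.2.1} : Set Pt))) = (u, v)) ⊆
        ((OF (n + 1)).filter fun x => ({x.1, x.2.1, x.2.2} : Set Pt) = v).image (fun x => (x, true))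
        ∪ ((OF (n + 1)).filter fun x => ({x.1, x.2.1, x.2.2} : Set Pt) = u).image
          (fun x => (x, false)) := by
      rintro ⟨x, b⟩ hx
      simp only [Finset.mem_filter, Finset.mem_product] at hx
      obtain ⟨⟨hx, -⟩, e⟩ := hx
      cases b <;> simp only [if_true, Bool.false_eq_true, if_false, Prod.mk.injEq] at e <;>
        simp [hx, e]
    refine (Finset.card_le_card hsub).trans ((Finset.card_union_le _ _).trans ?_)
    have a1 := card_triangle n v
    have a2 := card_triangle n u
    exact (add_le_add (Finset.card_image_le.trans a1) (Finset.card_image_le.trans a2))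

end Comparison

/-! ### Effective resistances and their limits -/

section Final
open scoped Classical
open Filter Topology

/-- The effective conductance in `G_n^T`. -/
def eT (n : ℕ) : ℝ := sInf {e : ℝ | ∃ f : Pt → ℝ, (∀ p ∈ LsetT n 2, f p = 0) ∧
  (∀ p ∈ LsetT n 5, f p = 1) ∧ e = energy (cT n) f}

/-- The effective conductance in `G_n^H`. -/
def eH (n : ℕ) : ℝ := sInf {e : ℝ | ∃ g : Set Pt → ℝ, (∀ v ∈ LsetH n 0 ∪ LsetH n 1, g v = 0) ∧
  (∀ v ∈ LsetH n 3 ∪ LsetH n 4, g v = 1) ∧ e = energy (cH n) g}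

lemma RT_eq (n : ℕ) : RT n = (eT n)⁻¹ := rfl

lemma RH_eq (n : ℕ) : RH n = (eH n)⁻¹ := rfl

lemma eT_le (n : ℕ) : eT (n + 1) ≤ dT (n + 1) := by
  obtain ⟨f, -, hf, -, e, -⟩ := minimizers n
  rw [e]
  refine le_trans (csInf_le ⟨0, ?_⟩ ⟨f, fun p hp => hf.1 p hp.2, fun p hp => hf.2 p hp.2, rfl⟩)
    (cT_compare n f).1
  rintro _ ⟨f', -, -, rfl⟩
  linarith [(cT_compare n f').2, DT_nonneg (n + 1) f']

/-- A potential that is admissible for `G_n^T` is extended to an admissible potential on the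
plane with the same Dirichlet sum. -/
lemma le_eT (n : ℕ) : 1 / 4 * dT (n + 1) ≤ eT (n + 1) := by
  obtain ⟨f₀, -, hf₀, -⟩ := minimizers n
  refine le_csInf ⟨_, f₀, fun p hp => hf₀.1 p hp.2, fun p hp => hf₀.2 p hp.2, rfl⟩ ?_
  rintro _ ⟨f, h0, h1, rfl⟩
  let F : Pt → ℝ := fun p => if p ∈ hexSide 5 then 1 else if p ∈ hexSide 2 then 0 else f p
  have hF : TestT F := by
    refine ⟨fun p hp => ?_, fun p hp => if_pos hp⟩
    have h5 : p ∉ hexSide 5 := fun h => by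
      have := exists_TestT.1 p hp
      simp only [if_pos h] at this
      norm_num at this
    simp only [F, if_neg h5, if_pos hp]
  have hv : ∀ p ∈ Simp0 (n + 1), F p = f p := fun p hp => by
    simp only [F]
    split_ifs with a b
    · exact (h1 p ⟨hp, a⟩).symm
    · exact (h0 p ⟨hp, b⟩).symm
    · rfl
  have hD : DT (n + 1) F = DT (n + 1) f := Finset.sum_congr rfl fun x hx => by
    have ho := mem_OF.1 hx
    rw [hv _ (mem_Simp0 ho), hv _ (mem_Simp0 ho.swap12)]
  linarith [dT_le (n := n + 1) hF, (cT_compare n f).2]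

lemma subset_of_mem_LsetH {n i : ℕ} {v : Set Pt} (h : v ∈ LsetH n i) :
    v.Nonempty ∧ v ⊆ hexSide i := by
  refine ⟨?_, (subset_convexHull ℝ v).trans h.2⟩
  rcases h.1 with h | h
  · obtain ⟨p, q, r, -, rfl⟩ := mem_Simp2.1 h
    exact ⟨p, by simp⟩
  · obtain ⟨p, q, r, -, rfl⟩ := mem_Simp1.1 h
    exact ⟨p, by simp⟩

lemma mem_LsetH {n i : ℕ} {v : Set Pt} (h : v ∈ Simp2 n ∪ Simp1 n) (hv : v ⊆ hexSide i) :
    v ∈ LsetH n i := ⟨h, convexHull_min hv (hexSide_convex i)⟩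

lemma TestH.admissible {g : Set Pt → ℝ} (hg : TestH g) (n : ℕ) :
    (∀ v ∈ LsetH n 0 ∪ LsetH n 1, g v = 0) ∧ ∀ v ∈ LsetH n 3 ∪ LsetH n 4, g v = 1 := by
  constructor <;> rintro v (hv | hv) <;> obtain ⟨a, b⟩ := subset_of_mem_LsetH hv
  · exact hg.1 v a (.inl b)
  · exact hg.1 v a (.inr b)
  · exact hg.2 v a (.inl b)
  · exact hg.2 v a (.inr b)

lemma eH_le (n : ℕ) : eH (n + 1) ≤ dH (n + 1) := by
  obtain ⟨-, g, -, hg, -, e, -⟩ := minimizers n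
  rw [e]
  obtain ⟨a, b⟩ := hg.admissible (n + 1)
  refine le_trans (csInf_le ⟨0, ?_⟩ ⟨g, a, b, rfl⟩) (cH_compare n g).1
  rintro _ ⟨g', -, -, rfl⟩
  linarith [(cH_compare n g').2, DH_nonneg (n + 1) g']

/-- A potential that is admissible for `G_n^H` is extended to an admissible potential on all sets
of points with the same Dirichlet sum. -/
lemma le_eH (n : ℕ) : 1 / 24 * dH (n + 1) ≤ eH (n + 1) := by
  obtain ⟨-, g₀, -, hg₀, -⟩ := minimizers n
  obtain ⟨a, b⟩ := hg₀.admissible (n + 1)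
  refine le_csInf ⟨_, g₀, a, b, rfl⟩ ?_
  rintro _ ⟨g, h0, h1, rfl⟩
  let F : Set Pt → ℝ := fun v => if v ⊆ hexSide 3 ∨ v ⊆ hexSide 4 then 1 else
    if v ⊆ hexSide 0 ∨ v ⊆ hexSide 1 then 0 else g v
  have hF : TestH F := by
    refine ⟨fun v hne hv => ?_, fun v _ hv => if_pos hv⟩
    have h5 : ¬ (v ⊆ hexSide 3 ∨ v ⊆ hexSide 4) := fun h => by
      have := exists_TestH.1 v hne hv
      simp only [if_pos h] at this
      norm_num at this
    simp only [F, if_neg h5, if_pos hv]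
  have hv : ∀ v ∈ Simp2 (n + 1) ∪ Simp1 (n + 1), F v = g v := fun v hv => by
    simp only [F]
    split_ifs with a b
    · exact (h1 v (a.imp (mem_LsetH hv) (mem_LsetH hv))).symm
    · exact (h0 v (b.imp (mem_LsetH hv) (mem_LsetH hv))).symm
    · rfl
  have hD : DH (n + 1) F = DH (n + 1) g := Finset.sum_congr rfl fun x hx => by
    have ho := mem_OF.1 hx
    rw [hv _ (.inl (mem_Simp2.2 ⟨_, _, _, ho, rfl⟩)), hv _ (.inr (mem_Simp1.2 ⟨_, _, _, ho, rfl⟩))]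
  linarith [dH_le (n := n + 1) hF, (cH_compare n g).2]

lemma dH_pos (n : ℕ) : 0 < dH (n + 1) :=
  pos_of_mul_pos_right (by rw [dT_mul_dH]; norm_num) (dT_pos n).le

lemma tendsto_log_inv {a : ℕ → ℝ} {L : ℝ}
    (h : Tendsto (fun n : ℕ => Real.log (a n) / n) atTop (𝓝 L)) :
    Tendsto (fun n : ℕ => Real.log (a n)⁻¹ / n) atTop (𝓝 (-L)) := by
  simpa only [Real.log_inv, neg_div] using h.neg

end Final

end BarycentricHexacarpet

namespace BarycentricHexacarpet

/-- The limits `log ρ = lim (1/n) log R_n` and `log ρ^T = lim (1/n) log R_n^T` exist. -/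
theorem limits_exist :
    ∃ ρ ρT : ℝ, 0 < ρ ∧ 0 < ρT ∧
      Filter.Tendsto (fun n : ℕ => Real.log (RH n) / n) Filter.atTop (nhds (Real.log ρ)) ∧
      Filter.Tendsto (fun n : ℕ => Real.log (RT n) / n) Filter.atTop (nhds (Real.log ρT)) := by
  obtain ⟨L, hL⟩ := dT_limit
  have hT := limit_of_comparable (by norm_num) dT_pos le_eT
    (fun n => by rw [one_mul]; exact eT_le n) hL
  have e : ∀ n, dH (n + 1) = 4 * (dT (n + 1))⁻¹ := fun n => by
    rw [← dT_mul_dH n, mul_comm (dT _), mul_assoc, mul_inv_cancel₀ (dT_pos n).ne', mul_one]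
  have hd := limit_of_comparable (a := fun n => (dT n)⁻¹) (b := dH) (c := 4) (C := 4)
    (by norm_num) (fun n => inv_pos.2 (dT_pos n)) (fun n => (e n).ge) (fun n => (e n).le)
    (tendsto_log_inv hL)
  have hH := limit_of_comparable (by norm_num) dH_pos le_eH
    (fun n => by rw [one_mul]; exact eH_le n) hd
  refine ⟨Real.exp L, Real.exp (-L), Real.exp_pos _, Real.exp_pos _, ?_, ?_⟩
  · rw [Real.log_exp]
    simpa only [RH_eq, neg_neg] using tendsto_log_inv hH
  · rw [Real.log_exp]
    simpa only [RT_eq] using tendsto_log_inv hT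

end BarycentricHexacarpet
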